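/- For every sentence σ in the first-order language of rings and every prime p, the set {k ≥ 1 : σ holds in GaloisField p k} is eventually periodic: there exist K and n ≥ 1 such that for all k ≥ K, σ holds in GaloisField p k if and only if σ holds in GaloisField p (k + n). -/

import Mathlib

open FirstOrder

/-- Truth of a ring-language sentence in a ring `K`, with `K` viewed as a structure for
the language of rings via `compatibleRingOfRing`. -/
def RingSentenceHolds (σ : Language.ring.Sentence)
    (K : Type*) [Add K] [Mul K] [Neg K] [One K] [Zero K] : Prop :=
  letI := Ring.compatibleRingOfRing K
  K ⊨ σ

namespace AxPer
open Polynomial Module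

section Filt
variable {K R : Type*} [Field K] [CommRing R] [Algebra K[X] R] [Algebra K R]
  [IsScalarTower K K[X] R] {m : ℕ} (b : Basis (Fin m) K[X] R)

/-- the elements all of whose coordinates have degree less than `M` -/
def U (M : ℕ) : Submodule K R where
  carrier := {r | ∀ i, b.repr r i ∈ degreeLT K M}
  add_mem' := by
    intro x y hx hy i
    simp only [map_add, Finsupp.add_apply]
    exact Submodule.add_mem _ (hx i) (hy i)
  zero_mem' := by intro i; simp
  smul_mem' := by
    intro c x hx i
    rw [← algebraMap_smul K[X] c x, map_smul, Finsupp.smul_apply, algebraMap_smul]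
    exact Submodule.smul_mem _ _ (hx i)

lemma mem_U {M : ℕ} {r : R} : r ∈ U b M ↔ ∀ i, b.repr r i ∈ degreeLT K M := Iff.rfl

lemma degreeLT_mono' {M N : ℕ} (h : M ≤ N) {a : K[X]} (ha : a ∈ degreeLT K M) :
    a ∈ degreeLT K N := by
  rw [mem_degreeLT] at *
  exact lt_of_lt_of_le ha (by exact_mod_cast h)

lemma degreeLT_mul {M N : ℕ} {a c : K[X]} (ha : a ∈ degreeLT K M) (hc : c ∈ degreeLT K N) :
    a * c ∈ degreeLT K (M + N) := by
  by_cases h0 : a = 0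
  · simp [h0]
  by_cases h1 : c = 0
  · simp [h1]
  rw [mem_degreeLT] at *
  rw [degree_eq_natDegree (mul_ne_zero h0 h1), natDegree_mul h0 h1]
  rw [degree_eq_natDegree h0] at ha
  rw [degree_eq_natDegree h1] at hc
  norm_cast at *
  omega

lemma U_mono {M N : ℕ} (h : M ≤ N) {r : R} (hr : r ∈ U b M) : r ∈ U b N :=
  fun i => degreeLT_mono' h (hr i)

lemma exists_mem_U (r : R) : ∃ M, r ∈ U b M := by
  refine ⟨(Finset.univ.sup fun i => (b.repr r i).natDegree) + 1, fun i => ?_⟩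
  rw [mem_degreeLT]
  refine lt_of_le_of_lt degree_le_natDegree ?_
  have : (b.repr r i).natDegree ≤ Finset.univ.sup fun i => (b.repr r i).natDegree :=
    Finset.le_sup (f := fun i => (b.repr r i).natDegree) (Finset.mem_univ i)
  exact_mod_cast Nat.lt_succ_of_le this

lemma poly_smul_mem_U {M N : ℕ} {a : K[X]} (ha : a ∈ degreeLT K M) {r : R} (hr : r ∈ U b N) :
    a • r ∈ U b (M + N) := by
  intro i
  rw [map_smul, Finsupp.smul_apply, smul_eq_mul]
  exact degreeLT_mul ha (hr i)

lemma mul_mem_U {c : ℕ} (hb : ∀ i j, b i * b j ∈ U b c) {M N : ℕ} {r s : R}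
    (hr : r ∈ U b M) (hs : s ∈ U b N) : r * s ∈ U b (M + N + c) := by
  rw [← b.sum_repr r, ← b.sum_repr s, Finset.sum_mul_sum]
  refine Submodule.sum_mem _ fun i _ => Submodule.sum_mem _ fun j _ => ?_
  rw [smul_mul_smul_comm]
  exact poly_smul_mem_U b (degreeLT_mul (hr i) (hs j)) (hb i j)

lemma pow_mem_U {c : ℕ} (hb : ∀ i j, b i * b j ∈ U b c) {M : ℕ} {r : R}
    (hr : r ∈ U b M) {t : ℕ} (ht : 0 < t) : r ^ t ∈ U b (t * (M + c)) := by
  induction t with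
  | zero => omega
  | succ t ih =>
    rcases Nat.eq_zero_or_pos t with h | h
    · subst h; simpa using U_mono b (by omega) hr
    · rw [pow_succ]
      have := mul_mem_U b hb (ih h) hr
      refine U_mono b (le_of_eq ?_) this
      ring

/-- coefficient vector -/
noncomputable def cf (M : ℕ) : R →ₗ[K] (Fin m × Fin M → K) where
  toFun r := fun i => (b.repr r i.1).coeff i.2
  map_add' x y := by ext i; simp
  map_smul' c x := by
    ext i
    rw [← algebraMap_smul K[X] c x, map_smul, Finsupp.smul_apply, algebraMap_smul]
    simp

lemma cf_inj {M : ℕ} {r : R} (hr : r ∈ U b M) (h : cf b M r = 0) : r = 0 := by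
  apply b.repr.injective
  ext i : 1
  simp only [map_zero, Finsupp.zero_apply]
  ext s
  by_cases hs : s < M
  · exact congrFun h (i, ⟨s, hs⟩)
  · have := hr i
    rw [mem_degreeLT] at this
    rw [coeff_eq_zero_of_degree_lt (lt_of_lt_of_le this (by exact_mod_cast not_lt.mp hs)), coeff_zero]

lemma card_le_of_U {M : ℕ} {ι : Type*} [Fintype ι] (v : ι → R) (hv : LinearIndependent K v)
    (hU : ∀ i, v i ∈ U b M) : Fintype.card ι ≤ m * M := by
  have h1 : LinearIndependent K (cf b M ∘ v) := by
    apply hv.map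
    rw [Submodule.disjoint_def]
    intro x hx hx0
    exact cf_inj b ((Submodule.span_le.mpr (by rintro _ ⟨i, rfl⟩; exact hU i)) hx) hx0
  have := h1.fintype_card_le_finrank
  simpa using this

/-- the standard family -/
noncomputable def be (M : ℕ) (i : Fin m × Fin M) : R := (X ^ (i.2 : ℕ) : K[X]) • b i.1

lemma X_pow_mem {s M : ℕ} (h : s < M) : (X ^ s : K[X]) ∈ degreeLT K M := by
  rw [mem_degreeLT, degree_X_pow]; exact_mod_cast h

lemma be_mem {M : ℕ} (i : Fin m × Fin M) : be b M i ∈ U b M := by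
  intro j
  simp only [be, map_smul, Basis.repr_self, Finsupp.smul_single, smul_eq_mul, mul_one]
  rw [Finsupp.single_apply]
  split_ifs
  · exact X_pow_mem i.2.2
  · simp

lemma cf_be {M : ℕ} (i : Fin m × Fin M) : cf b M (be b M i) = Pi.single i 1 := by
  ext j
  simp only [be, cf, LinearMap.coe_mk, AddHom.coe_mk, map_smul, Basis.repr_self,
    Finsupp.smul_single, smul_eq_mul, mul_one]
  rw [Finsupp.single_apply, Pi.single_apply]
  rcases i with ⟨i, s⟩
  rcases j with ⟨j, t⟩
  simp only [Prod.mk.injEq]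
  by_cases h : i = j
  · subst h
    simp [coeff_X_pow, Fin.ext_iff]
  · simp [h, Ne.symm h]

lemma be_li (M : ℕ) : LinearIndependent K (be b M) := by
  apply LinearIndependent.of_comp (cf b M)
  have : (cf b M ∘ be b M) = fun i => Pi.single i (1 : K) := by
    funext i; exact cf_be b i
  rw [this]
  have h := (Pi.basisFun K (Fin m × Fin M)).linearIndependent
  convert h using 1
  funext i
  simp

end Filt
end AxPer

namespace AxPer
open Polynomial Module

section Filt2
set_option linter.unusedSectionVars false
variable {K R : Type*} [Field K] [CommRing R] [IsDomain R] [Algebra K[X] R] [Algebra K R]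
  [IsScalarTower K K[X] R] {m : ℕ} (b : Basis (Fin m) K[X] R)

/-- dimension of `R / h R` -/
lemma quot_dim {c : ℕ} (hb : ∀ i j, b i * b j ∈ U b c) {H : ℕ} {h : R} (hH : h ∈ U b H)
    (h0 : h ≠ 0) {N : ℕ} (v : Fin N → R)
    (hv : ∀ (l : Fin N → K) (u : R), ∑ i, l i • v i = h * u → l = 0) : N ≤ m * (H + c) := by
  choose Mf hMf using fun i => exists_mem_U b (v i)
  set M := Finset.univ.sup Mf with hM
  have hvM : ∀ i, v i ∈ U b M := fun i => U_mono b (Finset.le_sup (Finset.mem_univ i)) (hMf i)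
  let w : Fin N ⊕ (Fin m × Fin M) → R := Sum.elim v (fun i => h * be b M i)
  have hw : LinearIndependent K w := by
    rw [Fintype.linearIndependent_iff]
    intro g hg
    simp only [Fintype.sum_sum_type, w, Sum.elim_inl, Sum.elim_inr] at hg
    have e1 : ∑ i, g (Sum.inl i) • v i = h * (- ∑ i, g (Sum.inr i) • be b M i) := by
      rw [mul_neg, Finset.mul_sum, eq_neg_iff_add_eq_zero, ← hg]
      congr 1
      exact Finset.sum_congr rfl fun i _ => by rw [mul_smul_comm]
    have e2 := hv _ _ e1
    have e3 : ∀ i, g (Sum.inl i) = 0 := fun i => congrFun e2 i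
    simp only [e3, zero_smul, Finset.sum_const_zero] at e1
    have e4 : ∑ i, g (Sum.inr i) • be b M i = 0 := by
      rcases mul_eq_zero.mp e1.symm with h1 | h1
      · exact absurd h1 h0
      · exact neg_eq_zero.mp h1
    have e5 := Fintype.linearIndependent_iff.mp (be_li b M) _ e4
    rintro (i | i)
    · exact e3 i
    · exact e5 i
  have hc := card_le_of_U b (M := H + M + c) w hw (by
    rintro (i | i)
    · exact U_mono b (by omega) (hvM i)
    · exact mul_mem_U b hb hH (be_mem b i))
  simp only [Fintype.card_sum, Fintype.card_fin, Fintype.card_prod] at hc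
  have : m * (H + M + c) = m * (H + c) + m * M := by ring
  omega

/-- dual elements for distinct points -/
lemma exists_dual {N : ℕ} (P : Fin N → (R →ₐ[K] K)) (hP : Function.Injective P) (i : Fin N) :
    ∃ v : R, P i v = 1 ∧ ∀ j, j ≠ i → P j v = 0 := by
  have h1 : ∀ j, ∃ u : R, P i u = 1 ∧ (j ≠ i → P j u = 0) := by
    intro j
    by_cases hj : j = i
    · exact ⟨1, by simp, fun h => absurd hj h⟩
    · have : P j ≠ P i := fun h => hj (hP h)
      obtain ⟨u, hu⟩ : ∃ u, P j u ≠ P i u := by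
        by_contra hcon
        push Not at hcon
        exact this (AlgHom.ext hcon)
      have hne : P i u - P j u ≠ 0 := sub_ne_zero.mpr (Ne.symm hu)
      refine ⟨(P i u - P j u)⁻¹ • (u - algebraMap K R (P j u)), ?_, fun _ => ?_⟩
      · simp [inv_mul_cancel₀ hne]
      · simp
  choose u hu using h1
  refine ⟨∏ j, u j, ?_, fun j hj => ?_⟩
  · rw [map_prod]; exact Finset.prod_eq_one fun j _ => (hu j).1
  · rw [map_prod]; exact Finset.prod_eq_zero (Finset.mem_univ j) ((hu j).2 hj)

lemma zeros_le {c : ℕ} (hb : ∀ i j, b i * b j ∈ U b c) {H : ℕ} {h : R} (hH : h ∈ U b H)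
    (h0 : h ≠ 0) {N : ℕ} (P : Fin N → (R →ₐ[K] K)) (hP : Function.Injective P)
    (hz : ∀ i, P i h = 0) : N ≤ m * (H + c) := by
  choose v hv using exists_dual P hP
  refine quot_dim b hb hH h0 v fun l u hl => ?_
  funext i
  have := congrArg (P i) hl
  rw [map_mul, hz i, zero_mul, map_sum, Finset.sum_eq_single i] at this
  · simpa [(hv i).1] using this
  · intro j _ hj
    rw [map_smul, (hv j).2 i (Ne.symm hj), smul_zero]
  · simp

lemma eq_zero_of_inf_zeros {c : ℕ} (hb : ∀ i j, b i * b j ∈ U b c) {h : R}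
    (Z : Set (R →ₐ[K] K)) (hZ : Z.Infinite) (hz : ∀ P ∈ Z, P h = 0) : h = 0 := by
  by_contra h0
  obtain ⟨H, hH⟩ := exists_mem_U b h
  obtain ⟨t, ht, htc⟩ := hZ.exists_subset_card_eq (m * (H + c) + 1)
  let e := t.equivFin
  have := zeros_le b hb hH h0 (fun i => ((e.symm i : t) : R →ₐ[K] K))
    (Subtype.val_injective.comp e.symm.injective) (fun i => hz _ (ht (e.symm i).2))
  omega

/-- the point `P` is unramified over the line -/
def Unram (P : R →ₐ[K] K) : Prop :=
  ∃ e : R, P e ≠ 0 ∧ ∀ u, P u = 0 →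
    algebraMap K[X] R (X - C (P (algebraMap K[X] R X))) ∣ u * e

lemma P_alg (P : R →ₐ[K] K) (a : K[X]) :
    P (algebraMap K[X] R a) = a.eval (P (algebraMap K[X] R X)) := by
  have : (P : R →+* K).comp (algebraMap K[X] R) = evalRingHom (P (algebraMap K[X] R X)) := by
    apply Polynomial.ringHom_ext
    · intro a
      simp only [RingHom.comp_apply, coe_evalRingHom, eval_C]
      rw [← Polynomial.algebraMap_eq, ← IsScalarTower.algebraMap_apply]
      simp
    · simp
  exact congrArg (fun f => f a) this

lemma algMap_inj (b : Basis (Fin m) K[X] R) (hm : 0 < m) : Function.Injective (algebraMap K[X] R) := by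
  intro x y hxy
  have : x • b ⟨0, hm⟩ = y • b ⟨0, hm⟩ := by
    rw [Algebra.smul_def, Algebra.smul_def, hxy]
  have := congrArg (fun z => b.repr z ⟨0, hm⟩) this
  simpa using this

/-- an element vanishing to high order is zero -/
lemma order_lemma {c : ℕ} (hm : 0 < m) (hb : ∀ i j, b i * b j ∈ U b c) {l Q : ℕ} {nu : R}
    (hl : nu ∈ U b l)
    (hQ : m * (l + c) < Q) (P : R →ₐ[K] K) (e : R) (he : P e ≠ 0)
    (hd : (algebraMap K[X] R (X - C (P (algebraMap K[X] R X)))) ^ Q ∣ nu * e ^ Q) : nu = 0 := by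
  by_contra h0
  set a := P (algebraMap K[X] R X) with ha
  set T : R := algebraMap K[X] R (X - C a) with hT
  have hT0 : T ≠ 0 := by
    rw [hT, Ne, map_eq_zero_iff _ (algMap_inj b hm)]
    exact X_sub_C_ne_zero a
  have hPT : P T = 0 := by
    rw [hT, P_alg, ← ha]; simp
  have := quot_dim b hb hl h0 (N := Q) (fun i => T ^ (i : ℕ)) (by
    intro lam u hlu
    by_contra hlam
    obtain ⟨i0, hi0⟩ : ∃ i, lam i ≠ 0 := by
      by_contra hcon; push Not at hcon; exact hlam (funext hcon)
    -- minimal index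
    classical
    obtain ⟨i, hi, hmin⟩ := Finset.exists_min_image (Finset.univ.filter fun i => lam i ≠ 0)
      (fun i => (i : ℕ)) ⟨i0, by simp [hi0]⟩
    simp only [Finset.mem_filter, Finset.mem_univ, true_and] at hi hmin
    have hsum : ∑ j, lam j • T ^ (j : ℕ) = T ^ (i : ℕ) * (∑ j, lam j • T ^ ((j : ℕ) - (i : ℕ))) := by
      rw [Finset.mul_sum]
      refine Finset.sum_congr rfl fun j _ => ?_
      by_cases hj : lam j = 0
      · simp [hj]
      · rw [mul_smul_comm, ← pow_add, Nat.add_sub_cancel' (hmin j hj)]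
    have hPs : P (∑ j, lam j • T ^ ((j : ℕ) - (i : ℕ))) = lam i := by
      rw [map_sum, Finset.sum_eq_single i]
      · simp
      · intro j _ hj
        by_cases hj0 : lam j = 0
        · simp [hj0]
        · have h1 := hmin j hj0
          have h2 : (j : ℕ) ≠ i := fun h => hj (Fin.ext h)
          rw [map_smul, map_pow, hPT, zero_pow (by omega), smul_zero]
      · simp
    obtain ⟨x, hx⟩ := hd
    have e1 : T ^ (i : ℕ) * ((∑ j, lam j • T ^ ((j : ℕ) - (i : ℕ))) * e ^ Q)
        = T ^ (i : ℕ) * (T ^ (Q - i) * x * u) := by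
      rw [← mul_assoc, ← hsum, hlu]
      calc nu * u * e ^ Q = (nu * e ^ Q) * u := by ring
        _ = T ^ Q * x * u := by rw [hx]
        _ = (T ^ (i : ℕ) * T ^ (Q - i)) * x * u := by
          rw [← pow_add, Nat.add_sub_cancel' i.2.le]
        _ = _ := by ring
    have e2 := mul_left_cancel₀ (pow_ne_zero _ hT0) e1
    have e3 := congrArg P e2
    have hlt := i.2
    rw [map_mul, hPs, map_mul, map_mul, map_pow, map_pow, hPT, zero_pow (by omega)] at e3
    simp only [zero_mul, mul_eq_zero] at e3
    rcases e3 with h | h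
    · exact hi h
    · exact he (eq_zero_of_pow_eq_zero h))
  omega

end Filt2
end AxPer

namespace AxPer
open Polynomial Module

section Upper
variable {K R : Type*} [Field K] [CommRing R] [IsDomain R] [Algebra K[X] R] [Algebra K R]
  [IsScalarTower K K[X] R] {m : ℕ}

lemma root_pow {p : ℕ} [IsAlgClosed K] (x : K) (hp : 0 < p) (s : ℕ) : ∃ y : K, y ^ p ^ s = x :=
  IsAlgClosed.exists_pow_nat_eq x (pow_pos hp s)

lemma inj_lemma (p : ℕ) [hp : Fact p.Prime] [CharP K p] [IsAlgClosed K]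
    (b : Basis (Fin m) K[X] R) {c n : ℕ} (hm : 0 < m)
    (hb : ∀ i j, b i * b j ∈ U b c) (S : Fin n → R) (hS : LinearIndependent K[X] S)
    (G : Set (R →ₐ[K] K)) (hG : G.Infinite) (hGu : ∀ P ∈ G, Unram P)
    {l M s : ℕ} (hQ : m * (l + c) < p ^ s) (nu : Fin M × Fin n → R) (hnu : ∀ i, nu i ∈ U b l)
    (h0 : ∑ i, nu i * (algebraMap K[X] R X ^ (i.1 : ℕ) * S i.2) ^ p ^ s = 0) :
    ∀ i, nu i = 0 := by
  have : CharP R p := charP_of_injective_algebraMap (algebraMap K R).injective p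
  set sf : Fin M × Fin n → R := fun i => algebraMap K[X] R X ^ (i.1 : ℕ) * S i.2 with hsf
  have h1 : ∀ P ∈ G, ∑ i, (P (sf i)) ^ p ^ s • nu i = 0 := by
    intro P hP
    obtain ⟨e, he, hd⟩ := hGu P hP
    refine order_lemma b hm hb (l := l) ?_ hQ P e he ?_
    · exact Submodule.sum_mem _ fun i _ => Submodule.smul_mem _ _ (hnu i)
    · have e1 : ∑ i, (P (sf i)) ^ p ^ s • nu i
          = - ∑ i, nu i * (sf i - algebraMap K R (P (sf i))) ^ p ^ s := by
        have : ∀ i, nu i * (sf i - algebraMap K R (P (sf i))) ^ p ^ s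
            = nu i * sf i ^ p ^ s - (P (sf i)) ^ p ^ s • nu i := by
          intro i
          rw [sub_pow_char_pow, mul_sub, ← map_pow, Algebra.smul_def, mul_comm (nu i) (algebraMap K R _)]
        rw [Finset.sum_congr rfl fun i _ => this i, Finset.sum_sub_distrib, h0]
        simp
      rw [e1, neg_mul, dvd_neg, Finset.sum_mul]
      refine Finset.dvd_sum fun i _ => ?_
      rw [mul_assoc, ← mul_pow]
      refine Dvd.dvd.mul_left (pow_dvd_pow_of_dvd (hd _ ?_) _) _
      simp
  obtain ⟨L, hL⟩ : ∃ L, ∀ i, nu i ∈ U b L := ⟨l, hnu⟩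
  intro i0
  refine cf_inj b (hnu i0) ?_
  funext t
  choose kap hkap using fun i => root_pow (p := p) (cf b l (nu i) t) hp.out.pos s
  have h2 : ∀ P ∈ G, P (∑ i, kap i • sf i) = 0 := by
    intro P hP
    have e1 := congrArg (fun z => cf b l z t) (h1 P hP)
    simp only [map_sum, map_smul, Finset.sum_apply, Pi.smul_apply, smul_eq_mul, map_zero,
      Pi.zero_apply] at e1
    have e2 : (P (∑ i, kap i • sf i)) ^ p ^ s = 0 := by
      rw [map_sum, sum_pow_char_pow, ← e1]
      refine Finset.sum_congr rfl fun i _ => ?_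
      rw [map_smul, smul_eq_mul, mul_pow, hkap, mul_comm]
    exact eq_zero_of_pow_eq_zero e2
  have h3 : ∑ i, kap i • sf i = 0 := eq_zero_of_inf_zeros b hb G hG h2
  have h4 : ∑ j, (∑ i : Fin M, C (kap (i, j)) * X ^ (i : ℕ)) • S j = 0 := by
    rw [← h3, Fintype.sum_prod_type_right]
    refine Finset.sum_congr rfl fun j _ => ?_
    rw [Finset.sum_smul]
    refine Finset.sum_congr rfl fun i _ => ?_
    simp only [hsf]
    rw [mul_smul, Algebra.smul_def (X ^ (i : ℕ) : K[X]), map_pow, ← algebraMap_smul K[X] (kap (i, j)),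
      Polynomial.algebraMap_eq]
  have h5 := Fintype.linearIndependent_iff.mp hS _ h4 i0.2
  have h6 := congrArg (fun q => q.coeff (i0.1 : ℕ)) h5
  simp only [finsetSum_coeff, coeff_C_mul_X_pow, coeff_zero] at h6
  rw [Finset.sum_eq_single i0.1] at h6
  · simp only [if_true] at h6
    rw [← hkap i0]
    have : kap i0 = 0 := h6
    rw [this, zero_pow (pow_ne_zero _ hp.out.ne_zero)]
    rfl
  · intro j _ hj
    rw [if_neg]
    intro h; exact hj (Fin.ext h.symm)
  · simp

theorem upper (p : ℕ) [hp : Fact p.Prime] [CharP K p] [IsAlgClosed K]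
    (b : Basis (Fin m) K[X] R) {c n : ℕ} (hm : 0 < m)
    (hb : ∀ i j, b i * b j ∈ U b c) (S Z : Fin n → R) (hS : LinearIndependent K[X] S)
    (hSU : ∀ j, S j ∈ U b c) (hZU : ∀ j, Z j ∈ U b c) (de : R)
    (G : Set (R →ₐ[K] K)) (hG : G.Infinite) (hGu : ∀ P ∈ G, Unram P)
    {l M s t : ℕ} (hQ : m * (l + c) < p ^ s)
    (hdim : m * (p ^ t * (l + c) + (M + c) + c) < (m * l) * (M * n))
    {N : ℕ} (P : Fin N → (R →ₐ[K] K)) (hP : Function.Injective P)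
    (hfix : ∀ i, (P i (algebraMap K[X] R X)) ^ p ^ (t + s) = P i (algebraMap K[X] R X))
    (hde : ∀ i, P i de ≠ 0)
    (hrel : ∀ i j, P i de * (P i (S j)) ^ p ^ (t + s) = P i (Z j)) :
    N ≤ m * (l + (p ^ s * M + p ^ s * (c + c)) + c + c) := by
  have : CharP R p := charP_of_injective_algebraMap (algebraMap K R).injective p
  -- a nontrivial relation
  let w : (Fin M × Fin n) × (Fin m × Fin l) → R := fun x =>
    be b l x.2 ^ p ^ t * (algebraMap K[X] R X ^ (x.1.1 : ℕ) * Z x.1.2)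
  have hwU : ∀ x, w x ∈ U b (p ^ t * (l + c) + (M + c) + c) := by
    intro x
    refine mul_mem_U b hb (pow_mem_U b hb (be_mem b x.2) (pow_pos hp.out.pos t)) ?_
    rw [← map_pow, ← Algebra.smul_def]
    exact poly_smul_mem_U b (X_pow_mem x.1.1.2) (hZU _)
  have hnli : ¬ LinearIndependent K w := by
    intro h
    have := card_le_of_U b w h hwU
    simp only [Fintype.card_prod, Fintype.card_fin] at this
    have e : M * n * (m * l) = (m * l) * (M * n) := by ring
    omega
  rw [Fintype.linearIndependent_iff] at hnli
  push Not at hnli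
  obtain ⟨lam, hlam, x0, hx0⟩ := hnli
  choose kap hkap using fun x => root_pow (p := p) (lam x) hp.out.pos t
  let nu : Fin M × Fin n → R := fun i => ∑ y, kap (i, y) • be b l y
  have hnuU : ∀ i, nu i ∈ U b l := fun i =>
    Submodule.sum_mem _ fun y _ => Submodule.smul_mem _ _ (be_mem b y)
  have hnu_pow : ∀ i, nu i ^ p ^ t = ∑ y, lam (i, y) • be b l y ^ p ^ t := by
    intro i
    simp only [nu]
    rw [sum_pow_char_pow]
    refine Finset.sum_congr rfl fun y _ => ?_
    rw [_root_.smul_pow, hkap]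
  have hrel0 : ∑ i, nu i ^ p ^ t * (algebraMap K[X] R X ^ (i.1 : ℕ) * Z i.2) = 0 := by
    rw [← hlam, Fintype.sum_prod_type (f := fun x => lam x • w x)]
    refine Finset.sum_congr rfl fun i _ => ?_
    rw [hnu_pow, Finset.sum_mul]
    refine Finset.sum_congr rfl fun y _ => ?_
    simp only [w, smul_mul_assoc]
  let h : R := ∑ i, nu i * (algebraMap K[X] R X ^ (i.1 : ℕ) * S i.2) ^ p ^ s
  have hne : h ≠ 0 := by
    intro h0
    have h1 := inj_lemma p b hm hb S hS G hG hGu hQ nu hnuU h0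
    have h2 := Fintype.linearIndependent_iff.mp (be_li b l) _ (h1 x0.1) x0.2
    apply hx0
    rw [← hkap, h2, zero_pow (pow_ne_zero _ hp.out.ne_zero)]
  have hhU : h ∈ U b (l + (p ^ s * M + p ^ s * (c + c)) + c) := by
    refine Submodule.sum_mem _ fun i _ => mul_mem_U b hb (hnuU i) ?_
    rw [mul_pow, ← pow_mul, ← map_pow, ← Algebra.smul_def]
    refine poly_smul_mem_U b (X_pow_mem ?_) (pow_mem_U b hb (hSU _) (pow_pos hp.out.pos s))
    rw [mul_comm]
    exact Nat.mul_lt_mul_of_pos_left i.1.2 (pow_pos hp.out.pos s)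
  refine zeros_le b hb hhU hne P hP fun k => ?_
  have e1 : P k de * (P k h) ^ p ^ t = 0 := by
    have := congrArg (P k) hrel0
    rw [map_zero, map_sum] at this
    rw [← this, map_sum, sum_pow_char_pow, Finset.mul_sum]
    refine Finset.sum_congr rfl fun i _ => ?_
    simp only [map_mul, map_pow, mul_pow, ← hrel]
    have e2 : ∀ x : K, (x ^ p ^ s) ^ p ^ t = x ^ p ^ (t + s) := by
      intro x; rw [← pow_mul, ← pow_add, add_comm]
    rw [e2, e2, ← pow_mul, mul_comm (i.1 : ℕ), pow_mul, hfix]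
    ring
  rcases mul_eq_zero.mp e1 with h1 | h1
  · exact absurd h1 (hde k)
  · exact eq_zero_of_pow_eq_zero h1
end Upper
end AxPer

namespace AxPer
open Polynomial Module

lemma arith_C {m n c r Q q l M : ℕ} (hm : 0 < m) (hn : 0 < n) (hq : q = r * Q) (hr2 : r * r ≤ Q)
    (hr : m * (4 * c + 3) + n * n * (3 * c + 3) + 1 ≤ r)
    (hl : l = r * (c + 1) + 2 * c + 2) (hM : M = r / n + 1) :
    m * (l + c) < Q ∧ m * (r * (l + c) + (M + c) + c) < (m * l) * (M * n) ∧
    ∀ (N : Fin n → ℕ) (i0 : Fin n), (∀ i, N i ≤ m * (l + (Q * M + Q * (c + c)) + c + c)) →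
      m * (q - c) ≤ ∑ i, N i → 0 < N i0 := by
  have hr1 : 1 ≤ r := by omega
  have h1 : m * (l + c) < Q := by
    refine lt_of_lt_of_le ?_ hr2
    have : l + c ≤ r * (4 * c + 3) := by subst hl; nlinarith
    calc m * (l + c) ≤ m * (r * (4 * c + 3)) := Nat.mul_le_mul_left _ this
      _ = r * (m * (4 * c + 3)) := by ring
      _ < r * r := by apply Nat.mul_lt_mul_of_pos_left _ hr1; omega
  have hMn1 : r + 1 ≤ M * n := by
    subst hM
    have := Nat.div_add_mod r n
    have h2 := Nat.mod_lt r hn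
    nlinarith
  have hMn2 : M * n ≤ r + n := by
    subst hM
    have := Nat.div_mul_le_self r n
    nlinarith
  have hMr : M ≤ r + 1 := by
    subst hM
    have := Nat.div_le_self r n
    omega
  refine ⟨h1, ?_, ?_⟩
  · rw [mul_assoc]
    apply Nat.mul_lt_mul_of_pos_left _ hm
    have : l * (r + 1) ≤ l * (M * n) := Nat.mul_le_mul_left _ hMn1
    refine lt_of_lt_of_le ?_ this
    have e : r * (l + c) + (M + c) + c = r * l + (r * c + M + 2 * c) := by ring
    have e2 : l * (r + 1) = r * l + l := by ring
    rw [e, e2]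
    have : r * c + M + 2 * c < l := by subst hl; nlinarith
    omega
  · intro N i0 hN hsum
    by_contra h0
    have h0 : N i0 = 0 := by omega
    have hlc : l + c < Q := lt_of_le_of_lt (Nat.le_mul_of_pos_left _ hm) h1
    have hb : ∀ i, n * N i ≤ m * (q + Q * n * (2 * c + 3)) := by
      intro i
      calc n * N i ≤ n * (m * (l + (Q * M + Q * (c + c)) + c + c)) := Nat.mul_le_mul_left _ (hN i)
        _ = m * (n * (l + c) + n * c + Q * (M * n) + Q * n * (2 * c)) := by ring
        _ ≤ m * (n * Q + n * Q + Q * (r + n) + Q * n * (2 * c)) := by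
            have : c ≤ Q := by omega
            gcongr
        _ = m * (q + Q * n * (2 * c + 3)) := by subst hq; ring
    have hs2 : n * ∑ i, N i ≤ (n - 1) * (m * (q + Q * n * (2 * c + 3))) := by
      rw [Finset.mul_sum, ← Finset.sum_erase_add _ _ (Finset.mem_univ i0), h0, mul_zero, add_zero]
      refine (Finset.sum_le_card_nsmul _ _ _ fun i _ => hb i).trans ?_
      simp
    have hs3 : n * (m * (q - c)) ≤ (n - 1) * (m * (q + Q * n * (2 * c + 3))) :=
      (Nat.mul_le_mul_left _ hsum).trans hs2
    have hs4 : n * (q - c) ≤ (n - 1) * (q + Q * n * (2 * c + 3)) := by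
      apply Nat.le_of_mul_le_mul_left _ hm
      calc m * (n * (q - c)) = n * (m * (q - c)) := by ring
        _ ≤ _ := hs3
        _ = _ := by ring
    obtain ⟨n', rfl⟩ : ∃ n', n = n' + 1 := ⟨n - 1, by omega⟩
    simp only [Nat.add_sub_cancel] at hs4
    have hQ1 : 1 ≤ Q := by omega
    have hcq : c ≤ q := by subst hq; nlinarith
    obtain ⟨q', hq'⟩ : ∃ q', q = q' + c := ⟨q - c, by omega⟩
    have e : q - c = q' := by omega
    rw [e] at hs4
    have h5 : q ≤ (n' + 1) * c + n' * (Q * (n' + 1) * (2 * c + 3)) := by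
      rw [hq'] at hs4 ⊢
      nlinarith
    have h6 : q ≤ Q * ((n' + 1) * (n' + 1) * (3 * c + 3)) := by
      refine h5.trans ?_
      have a1 : (n' + 1) * c ≤ Q * ((n' + 1) * (n' + 1) * c) := by
        calc (n' + 1) * c = 1 * ((n' + 1) * 1 * c) := by ring
          _ ≤ Q * ((n' + 1) * (n' + 1) * c) := by gcongr; omega
      have a2 : n' * (Q * (n' + 1) * (2 * c + 3)) ≤ (n' + 1) * (Q * (n' + 1) * (2 * c + 3)) := by
        gcongr; omega
      calc _ ≤ Q * ((n' + 1) * (n' + 1) * c) + (n' + 1) * (Q * (n' + 1) * (2 * c + 3)) := by omega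
        _ = _ := by ring
    rw [hq, mul_comm] at h6
    have h7 := Nat.le_of_mul_le_mul_left h6 (by omega)
    omega

section C
variable {K R : Type*} [Field K] [CommRing R] [IsDomain R] [Algebra K[X] R] [Algebra K R]
  [IsScalarTower K K[X] R]

lemma card_fix (p : ℕ) [hp : Fact p.Prime] [CharP K p] [IsAlgClosed K] {k : ℕ} (hk : 0 < k) 
    (D : K[X]) (hD : D ≠ 0) {c : ℕ} (hDc : D.natDegree ≤ c) :
    ∃ F : Finset K, p ^ k - c ≤ F.card ∧ ∀ a ∈ F, a ^ p ^ k = a ∧ D.eval a ≠ 0 := by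
  classical
  let f : K[X] := X ^ p ^ k - X
  have h1 : 1 < p ^ k := Nat.one_lt_pow hk.ne' hp.out.one_lt
  have hf0 : f ≠ 0 := FiniteField.X_pow_card_sub_X_ne_zero K h1
  have hfd : f.natDegree = p ^ k := FiniteField.X_pow_card_sub_X_natDegree_eq K h1
  have hsep : f.Separable := galois_poly_separable p _ (dvd_pow_self p hk.ne')
  have hcard : f.roots.toFinset.card = p ^ k := by
    rw [Multiset.toFinset_card_of_nodup (nodup_roots hsep), ← hfd]
    exact (splits_iff_card_roots.mp (IsAlgClosed.splits f))
  refine ⟨f.roots.toFinset \ D.roots.toFinset, ?_, ?_⟩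
  · have h2 := Finset.le_card_sdiff D.roots.toFinset f.roots.toFinset
    have h3 : D.roots.toFinset.card ≤ c :=
      (Multiset.toFinset_card_le _).trans ((card_roots' D).trans hDc)
    omega
  · intro a ha
    simp only [Finset.mem_sdiff, Multiset.mem_toFinset, mem_roots hf0, mem_roots hD, IsRoot.def] at ha
    refine ⟨?_, ha.2⟩
    have := ha.1
    simp only [f, eval_sub, eval_pow, eval_X] at this
    exact sub_eq_zero.mp this

theorem thmC (p : ℕ) [hp : Fact p.Prime] [CharP K p] [IsAlgClosed K] {m n c : ℕ}
    (hm : 0 < m) {k : ℕ}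
    (hk : 3 * (m * (4 * c + 3) + n * n * (3 * c + 3) + 1) ≤ k)
    (b : Basis (Fin m) K[X] R) 
    (hb : ∀ i j, b i * b j ∈ U b c) (S : Fin n → R) (Z : Fin n → Fin n → R)
    (hS : LinearIndependent K[X] S)
    (hSU : ∀ j, S j ∈ U b c) (hZU : ∀ i j, Z i j ∈ U b c) (de : R)
    (D : K[X]) (hD : D ≠ 0) (hDc : D.natDegree ≤ c)
    (hpts : ∀ a : K, D.eval a ≠ 0 → ∃ P : Fin m → (R →ₐ[K] K), Function.Injective P ∧
      ∀ i, P i (algebraMap K[X] R X) = a)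
    (hun : ∀ P : R →ₐ[K] K, D.eval (P (algebraMap K[X] R X)) ≠ 0 → Unram P ∧ P de ≠ 0)
    (E : Fin n → Set (R →ₐ[K] K))
    (hcov : ∀ P : R →ₐ[K] K, D.eval (P (algebraMap K[X] R X)) ≠ 0 →
      P (algebraMap K[X] R X) ^ p ^ k = P (algebraMap K[X] R X) → ∃ i, P ∈ E i)
    (hE : ∀ i, ∀ P ∈ E i, ∀ j, P de * P (S j) ^ p ^ k = P (Z i j)) (i0 : Fin n) :
    ∃ P ∈ E i0, P (algebraMap K[X] R X) ^ p ^ k = P (algebraMap K[X] R X) ∧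
      D.eval (P (algebraMap K[X] R X)) ≠ 0 := by
  classical
  have hn : 0 < n := i0.pos
  set t := k / 3 with ht
  set s := k - k / 3 with hs
  have hk' : t + s = k := by omega
  have hrt : t < p ^ t := Nat.lt_pow_self hp.out.one_lt
  have hrr : p ^ t * p ^ t ≤ p ^ s := by
    rw [← pow_add]; exact Nat.pow_le_pow_right hp.out.pos (by omega)
  obtain ⟨a1, a2, a3⟩ := arith_C (m := m) (n := n) (c := c) (r := p ^ t) (Q := p ^ s) (q := p ^ k)
    (l := p ^ t * (c + 1) + 2 * c + 2) (M := p ^ t / n + 1) hm hn (by rw [← pow_add, hk']) hrr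
    (by omega) rfl rfl
  obtain ⟨F, hF1, hF2⟩ := card_fix (K := K) p (by omega : 0 < k) D hD hDc
  have h1 : ({a : K | D.eval a ≠ 0}).Infinite := by
    have : Infinite K := IsAlgClosed.instInfinite
    have h2 : ({a : K | D.eval a = 0}).Finite := by
      refine (D.roots.toFinset.finite_toSet).subset ?_
      intro a ha
      simpa [hD] using ha
    exact h2.infinite_compl
  have hne : Nonempty (R →ₐ[K] K) := by
    obtain ⟨a, ha⟩ := h1.nonempty
    obtain ⟨P, -, -⟩ := hpts a ha
    exact ⟨P ⟨0, hm⟩⟩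
  choose! pts hpi hpa using hpts
  let g : K × Fin m → (R →ₐ[K] K) := fun x => pts x.1 x.2
  have hg : Set.InjOn g (F ×ˢ (Finset.univ : Finset (Fin m)) : Finset (K × Fin m)) := by
    rintro ⟨a, i⟩ ha ⟨a', i'⟩ ha' h
    simp only [Finset.coe_product, Set.mem_prod, Finset.mem_coe] at ha ha'
    have h1 := hpa a (hF2 a ha.1).2 i
    have h2 := hpa a' (hF2 a' ha'.1).2 i'
    have h3 : a = a' := by
      rw [← h1, ← h2]
      exact congrArg (fun (P : R →ₐ[K] K) => P (algebraMap K[X] R X)) h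
    subst h3
    exact Prod.ext rfl (hpi a (hF2 a ha.1).2 h)
  let T := (F ×ˢ (Finset.univ : Finset (Fin m))).image g
  have hTc : m * (p ^ k - c) ≤ T.card := by
    rw [Finset.card_image_of_injOn hg, Finset.card_product, Finset.card_univ, Fintype.card_fin,
      mul_comm]
    exact Nat.mul_le_mul_right _ hF1
  have hT : ∀ P ∈ T, P (algebraMap K[X] R X) ^ p ^ k = P (algebraMap K[X] R X) ∧
      D.eval (P (algebraMap K[X] R X)) ≠ 0 := by
    intro P hP
    obtain ⟨⟨a, i⟩, ha, rfl⟩ := Finset.mem_image.mp hP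
    have ha := (Finset.mem_product.mp ha).1
    simp only [g]
    rw [hpa a (hF2 a ha).2 i]
    exact hF2 a ha
  let Ti : Fin n → Finset (R →ₐ[K] K) := fun i => T.filter (· ∈ E i)
  have hsum : m * (p ^ k - c) ≤ ∑ i, (Ti i).card := by
    refine hTc.trans ?_
    have : T ⊆ Finset.univ.biUnion Ti := by
      intro P hP
      obtain ⟨i, hi⟩ := hcov P (hT P hP).2 (hT P hP).1
      exact Finset.mem_biUnion.mpr ⟨i, Finset.mem_univ _, Finset.mem_filter.mpr ⟨hP, hi⟩⟩
    exact (Finset.card_le_card this).trans Finset.card_biUnion_le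
  let G : Set (R →ₐ[K] K) := {P | D.eval (P (algebraMap K[X] R X)) ≠ 0}
  have hG : G.Infinite := by
    refine Set.infinite_of_injOn_mapsTo (f := fun a => pts a ⟨0, hm⟩) ?_ ?_ h1
    · intro a ha a' ha' h
      rw [← hpa a ha ⟨0, hm⟩, ← hpa a' ha' ⟨0, hm⟩]
      exact congrArg (fun (P : R →ₐ[K] K) => P (algebraMap K[X] R X)) h
    · intro a ha
      change D.eval (pts a ⟨0, hm⟩ (algebraMap K[X] R X)) ≠ 0
      rw [hpa a ha]
      exact ha
  have hup : ∀ i, (Ti i).card ≤ m * (p ^ t * (c + 1) + 2 * c + 2 + (p ^ s * (p ^ t / n + 1) + p ^ s * (c + c)) + c + c) := by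
    intro i
    have hmem : ∀ x : Fin (Ti i).card, ((Ti i).equivFin.symm x : R →ₐ[K] K) ∈ Ti i := 
      fun x => ((Ti i).equivFin.symm x).2
    refine upper p b hm hb S (Z i) hS hSU (hZU i) de G hG (fun P hP => (hun P hP).1) (t := t)
      a1 a2 (fun x => ((Ti i).equivFin.symm x : R →ₐ[K] K)) ?_ ?_ ?_ ?_
    · intro x y h
      exact (Ti i).equivFin.symm.injective (Subtype.ext h)
    · intro x
      rw [hk']
      exact (hT _ (Finset.mem_filter.mp (hmem x)).1).1
    · intro x
      exact (hun _ (hT _ (Finset.mem_filter.mp (hmem x)).1).2).2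
    · intro x j
      rw [hk']
      exact hE i _ (Finset.mem_filter.mp (hmem x)).2 j
  have := a3 _ i0 hup hsum
  obtain ⟨P, hP⟩ := Finset.card_pos.mp this
  have hP := Finset.mem_filter.mp hP
  exact ⟨P, hP.2, hT P hP.1⟩
end C
end AxPer

namespace AxPer
open Polynomial Module Filter

section Germ
variable {k : Type} [Field k]

/-- the ultrafilter we use -/
noncomputable abbrev W : Ultrafilter ℕ := hyperfilter ℕ

/-- the ultrapower -/
abbrev Om (k : Type) := Germ (W : Filter ℕ) k

/-- germ of a family of homs -/
noncomputable def germHom {S : Type*} [CommRing S] (h : ℕ → S →+* k) : S →+* Om k where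
  toFun s := ((fun N => h N s : ℕ → k) : Om k)
  map_one' := by simp; rfl
  map_zero' := by simp; rfl
  map_mul' x y := by simp; rfl
  map_add' x y := by simp; rfl

lemma germHom_apply {S : Type*} [CommRing S] (h : ℕ → S →+* k) (s : S) :
    germHom h s = ((fun N => h N s : ℕ → k) : Om k) := rfl

lemma germHom_eq_zero {S : Type*} [CommRing S] (h : ℕ → S →+* k) (s : S) :
    germHom h s = 0 ↔ ∀ᶠ N in (W : Filter ℕ), h N s = 0 := by
  rw [germHom_apply]
  exact Germ.coe_eq

lemma germHom_ne_zero {S : Type*} [CommRing S] (h : ℕ → S →+* k) (s : S) :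
    germHom h s ≠ 0 ↔ ∀ᶠ N in (W : Filter ℕ), h N s ≠ 0 := by
  rw [Ne, germHom_eq_zero, ← Ultrafilter.eventually_not]

variable (p : ℕ) [hp : Fact p.Prime] [CharP k p]

/-- nonuniform Frobenius -/
noncomputable def phi (κ : ℕ → ℕ) : Om k →+* Om k where
  toFun := Germ.map' (fun x N => x N ^ p ^ κ N) (by
    intro x y h
    filter_upwards [h] with N hN
    simp only [hN])
  map_one' := by
    change ((fun N => (1 : k) ^ p ^ κ N : ℕ → k) : Om k) = 1
    simp; rfl
  map_zero' := by
    change ((fun N => (0 : k) ^ p ^ κ N : ℕ → k) : Om k) = 0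
    simp [hp.out.ne_zero]; rfl
  map_mul' x y := by
    induction x, y using Germ.inductionOn₂ with | _ x y
    change ((fun N => (x N * y N) ^ p ^ κ N : ℕ → k) : Om k) = ((fun N => x N ^ p ^ κ N * y N ^ p ^ κ N : ℕ → k) : Om k)
    simp [mul_pow]
  map_add' x y := by
    induction x, y using Germ.inductionOn₂ with | _ x y
    change ((fun N => (x N + y N) ^ p ^ κ N : ℕ → k) : Om k) = ((fun N => x N ^ p ^ κ N + y N ^ p ^ κ N : ℕ → k) : Om k)
    simp [add_pow_char_pow]

lemma phi_coe (κ : ℕ → ℕ) (x : ℕ → k) :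
    phi p κ (x : Om k) = ((fun N => x N ^ p ^ κ N : ℕ → k) : Om k) := rfl

instance : CharP (Om k) p := by
  have : CharP k p := inferInstance
  exact charP_of_injective_ringHom (f := germHom (fun _ => RingHom.id k)) (RingHom.injective _) p

/-- algebraically closed -/
instance [IsAlgClosed k] : IsAlgClosed (Om k) := by
  apply IsAlgClosed.of_exists_root
  intro P hP hirr
  have hd : 0 < P.natDegree := hirr.natDegree_pos
  choose r hr using fun i : ℕ => Quotient.exists_rep (P.coeff i)
  let f : ℕ → k[X] := fun N => X ^ P.natDegree + ∑ i ∈ Finset.range P.natDegree, C (r i N) * X ^ i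
  have h1 : ∀ N, ∃ x, (f N).eval x = 0 := by
    intro N
    apply IsAlgClosed.exists_root
    have hlt : (∑ i ∈ Finset.range P.natDegree, C (r i N) * X ^ i : k[X]).degree < (P.natDegree : WithBot ℕ) := by
      refine (degree_sum_le _ _).trans_lt ?_
      rw [Finset.sup_lt_iff (WithBot.bot_lt_coe _)]
      intro i hi
      refine (degree_C_mul_X_pow_le _ _).trans_lt ?_
      exact_mod_cast Finset.mem_range.mp hi
    have := degree_add_eq_left_of_degree_lt (hlt.trans_eq (degree_X_pow (R := k) P.natDegree).symm)
    simp only [f]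
    rw [this, degree_X_pow]
    exact_mod_cast hd.ne'
  choose x hx using h1
  refine ⟨(x : Om k), ?_⟩
  rw [hP.as_sum]
  have e : eval (x : Om k) (X ^ P.natDegree + ∑ i ∈ Finset.range P.natDegree, C (P.coeff i) * X ^ i)
      = ((fun N => (f N).eval (x N) : ℕ → k) : Om k) := by
    let h : ∀ N, MvPolynomial (Option ℕ) ℤ →+* k := fun N => 
      MvPolynomial.eval₂Hom (Int.castRingHom k) (fun o => o.elim (x N) (fun i => r i N))
    have e1 : germHom h (MvPolynomial.X none) = (x : Om k) := by
      rw [germHom_apply]; simp [h]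
    have e2 : ∀ i, germHom h (MvPolynomial.X (some i)) = P.coeff i := by
      intro i
      rw [germHom_apply]; simp only [h, MvPolynomial.eval₂Hom_X', Option.elim_some]; exact hr i
    have e3 := germHom_apply h (MvPolynomial.X none ^ P.natDegree + 
      ∑ i ∈ Finset.range P.natDegree, MvPolynomial.X (some i) * MvPolynomial.X none ^ i)
    simp only [map_add, map_pow, map_sum, map_mul, e1, e2] at e3
    simp only [eval_add, eval_pow, eval_X, eval_finsetSum, eval_mul, eval_C]
    rw [e3]
    congr 1
    funext N
    simp [f, h, eval_finsetSum]
  rw [e]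
  simp only [hx]
  rfl

/-- specialization of finitely generated subrings -/
lemma spec_lemma {A : Type} [Field A] [CharP A p] (io : A →+* Om k) (s : Finset A) :
    ∃ (A0 : Type) (_ : CommRing A0) (j : A0 →+* A) (h : ℕ → A0 →+* k),
      Function.Injective j ∧ (∀ a ∈ s, a ∈ j.range) ∧ germHom h = io.comp j := by
  classical
  let M := MvPolynomial s (ZMod p)
  let q : M →+* A := MvPolynomial.eval₂Hom (ZMod.castHom dvd_rfl A) (fun x => (x : A))
  choose v hv using fun x : s => Quotient.exists_rep (io x)
  let H : ℕ → M →+* k := fun N => MvPolynomial.eval₂Hom (ZMod.castHom dvd_rfl k) (fun x => v x N)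
  have hH : germHom H = io.comp q := by
    apply MvPolynomial.ringHom_ext'
    · exact Subsingleton.elim _ _
    · intro x
      rw [germHom_apply]
      simp only [H, q, MvPolynomial.eval₂Hom_X', RingHom.comp_apply]
      exact hv x
  obtain ⟨G, hG⟩ := (inferInstance : IsNoetherianRing M).noetherian (RingHom.ker q)
  have hev : ∀ᶠ N in (W : Filter ℕ), ∀ g ∈ G, H N g = 0 := by
    rw [Finset.eventually_all]
    intro g hg
    rw [← germHom_eq_zero, hH]
    have : g ∈ RingHom.ker q := by rw [← hG]; exact Submodule.subset_span hg
    rw [RingHom.comp_apply, RingHom.mem_ker.mp this, map_zero]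
  have hev2 : ∀ᶠ N in (W : Filter ℕ), ∀ a ∈ RingHom.ker q, H N a = 0 := by
    filter_upwards [hev] with N hN a ha
    have : RingHom.ker q ≤ RingHom.ker (H N) := by
      rw [← hG]
      exact Submodule.span_le.mpr fun g hg => hN g hg
    exact this ha
  obtain ⟨N0, hN0⟩ := hev2.exists
  let h : ℕ → (M ⧸ RingHom.ker q) →+* k := fun N => 
    if hN : ∀ a ∈ RingHom.ker q, H N a = 0 then Ideal.Quotient.lift _ (H N) hN
    else Ideal.Quotient.lift _ (H N0) hN0
  refine ⟨M ⧸ RingHom.ker q, inferInstance, RingHom.kerLift q, h, RingHom.kerLift_injective q, ?_, ?_⟩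
  · intro a ha
    refine ⟨Ideal.Quotient.mk _ (MvPolynomial.X ⟨a, ha⟩), ?_⟩
    rw [RingHom.kerLift_mk]
    exact MvPolynomial.eval₂Hom_X' _ _ _
  · apply Ideal.Quotient.ringHom_ext
    rw [RingHom.comp_assoc]
    have : (RingHom.kerLift q).comp (Ideal.Quotient.mk (RingHom.ker q)) = q := by
      exact RingHom.ext fun x => RingHom.kerLift_mk q x
    rw [this, ← hH]
    refine RingHom.ext fun x => ?_
    rw [RingHom.comp_apply, germHom_apply, germHom_apply]
    refine Germ.coe_eq.mpr ?_
    filter_upwards [hev2] with N hN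
    simp only [h]
    rw [dif_pos hN, Ideal.Quotient.lift_mk]

lemma eventually_of_germHom {A A0 : Type} [CommRing A0] [Field A] {io : A →+* Om k} {j : A0 →+* A}
    {h : ℕ → A0 →+* k} (hj : Function.Injective j) (hh : germHom h = io.comp j) {a : A0} (ha : a ≠ 0) :
    ∀ᶠ N in (W : Filter ℕ), h N a ≠ 0 := by
  rw [← germHom_ne_zero, hh, RingHom.comp_apply]
  simpa using (map_ne_zero_iff j hj).mpr ha

/-- saturation -/
lemma saturation {Y : ℕ → Type*} [∀ N, Nonempty (Y N)] (c : ℕ → ∀ N, Y N → Prop)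
    (h : ∀ n, ∀ᶠ N in (W : Filter ℕ), ∃ e : Y N, ∀ i < n, c i N e) :
    ∃ e : ∀ N, Y N, ∀ i, ∀ᶠ N in (W : Filter ℕ), c i N (e N) := by
  classical
  let g : ℕ → ℕ := fun N => Nat.findGreatest (fun n => ∃ e : Y N, ∀ i < n, c i N e) N
  have hg : ∀ N, ∃ e : Y N, ∀ i < g N, c i N e := by
    intro N
    have := Nat.findGreatest_spec (P := fun n => ∃ e : Y N, ∀ i < n, c i N e) (Nat.zero_le N)
      ⟨Classical.arbitrary _, by simp⟩
    exact this
  choose e he using hg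
  refine ⟨e, fun i => ?_⟩
  have h2 : ∀ᶠ N in (W : Filter ℕ), i + 1 ≤ N := by
    have : (W : Filter ℕ) ≤ atTop := by
      rw [← Nat.cofinite_eq_atTop]; exact hyperfilter_le_cofinite
    exact this (eventually_ge_atTop _)
  filter_upwards [h (i + 1), h2] with N hN hi
  apply he
  exact Nat.le_findGreatest hi hN

end Germ
end AxPer

namespace AxPer
open Polynomial Module Filter

lemma coeff_swap {R : Type*} [CommRing R] (p : R[X][X]) (i j : ℕ) :
    ((Bivariate.swap p).coeff i).coeff j = (p.coeff j).coeff i := by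
  induction p using Polynomial.induction_on' with
  | add p q hp hq => simp [hp, hq]
  | monomial n a =>
    induction a using Polynomial.induction_on' with
    | add p q hp hq => 
      rw [(monomial n).map_add, map_add, coeff_add, coeff_add, hp, hq, coeff_add, coeff_add]
    | monomial m a =>
      rw [Bivariate.swap_monomial_monomial]
      simp only [coeff_monomial]
      split_ifs <;> simp_all [coeff_monomial]

lemma natDegree_swap_le {R : Type*} [CommRing R] (p : R[X][X]) {e : ℕ}
    (h : ∀ i, (p.coeff i).natDegree ≤ e) : (Bivariate.swap p).natDegree ≤ e := by
  rw [natDegree_le_iff_coeff_eq_zero]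
  intro i hi
  ext j
  rw [coeff_swap, coeff_zero, coeff_eq_zero_of_natDegree_lt (lt_of_le_of_lt (h j) hi)]

lemma coeff_natDegree_le_swap {R : Type*} [CommRing R] (p : R[X][X]) (i : ℕ) :
    (p.coeff i).natDegree ≤ (Bivariate.swap p).natDegree := by
  rw [natDegree_le_iff_coeff_eq_zero]
  intro j hj
  rw [← coeff_swap, coeff_eq_zero_of_natDegree_lt hj, coeff_zero]

lemma factor_degree {k : Type*} [Field k] {f g h : k[X][X]} (hf : f ≠ 0) (hgh : g * h = f) {e : ℕ}
    (he : ∀ i, (f.coeff i).natDegree ≤ e) (i : ℕ) : (g.coeff i).natDegree ≤ e := by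
  refine (coeff_natDegree_le_swap g i).trans (le_trans ?_ (natDegree_swap_le f he))
  apply natDegree_le_of_dvd
  · exact ⟨_, by rw [← hgh, map_mul]⟩
  · simpa using hf

/-- generic monic bivariate polynomial -/
noncomputable def Gen {S : Type*} [CommRing S] {a e : ℕ} (v : Fin a × Fin e → S) : S[X][X] :=
  X ^ a + ∑ i : Fin a, C (∑ l : Fin e, C (v (i, l)) * X ^ (l : ℕ)) * X ^ (i : ℕ)

lemma Gen_map {S T : Type*} [CommRing S] [CommRing T] {a e : ℕ} (v : Fin a × Fin e → S) (h : S →+* T) :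
    (Gen v).map (mapRingHom h) = Gen (h ∘ v) := by
  simp [Gen, Polynomial.map_sum]

lemma Gen_lt {S : Type*} [CommRing S] {a e : ℕ} (v : Fin a × Fin e → S) :
    (∑ i : Fin a, C (∑ l : Fin e, C (v (i, l)) * X ^ (l : ℕ)) * X ^ (i : ℕ) : S[X][X]).degree
      < (a : WithBot ℕ) := by
  refine (degree_sum_le _ _).trans_lt ?_
  rw [Finset.sup_lt_iff (WithBot.bot_lt_coe _)]
  intro i hi
  refine (degree_C_mul_X_pow_le _ _).trans_lt ?_
  exact_mod_cast i.2

lemma Gen_monic {S : Type*} [CommRing S] {a e : ℕ} (v : Fin a × Fin e → S) : (Gen v).Monic :=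
  monic_X_pow_add (Gen_lt v)

lemma Gen_natDegree {S : Type*} [CommRing S] [Nontrivial S] {a e : ℕ} (v : Fin a × Fin e → S) :
    (Gen v).natDegree = a := by
  have := degree_add_eq_left_of_degree_lt ((Gen_lt v).trans_eq (degree_X_pow a).symm)
  rw [degree_X_pow] at this
  exact natDegree_eq_of_degree_eq_some this

lemma Gen_surj {S : Type*} [CommRing S] {g : S[X][X]} (hg : g.Monic) {e : ℕ}
    (he : ∀ i, (g.coeff i).natDegree < e) :
    g = Gen (fun x : Fin g.natDegree × Fin e => (g.coeff x.1).coeff x.2) := by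
  conv_lhs => rw [hg.as_sum]
  rw [Gen, Finset.sum_range]
  congr 1
  refine Finset.sum_congr rfl fun i _ => ?_
  congr 2
  rw [as_sum_range_C_mul_X_pow' _ (he i)]
  rw [Finset.sum_range]

section Irr
variable {k : Type} [Field k]

lemma exists_spec {A T : Type} [Field A] [IsAlgClosed A] [Field T] [Algebra A T] {σ : Type} [Finite σ]
    (v : σ → T) : ∃ w : σ → A, ∀ r : MvPolynomial σ A, MvPolynomial.aeval v r = 0 →
      MvPolynomial.aeval w r = 0 := by
  let I : Ideal (MvPolynomial σ A) := RingHom.ker (MvPolynomial.aeval (R := A) v).toRingHom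
  have hI : I ≠ ⊤ := RingHom.ker_ne_top _
  obtain ⟨m, hm, hIm⟩ := Ideal.exists_le_maximal I hI
  obtain ⟨w, rfl⟩ := (MvPolynomial.isMaximal_iff_eq_vanishingIdeal_singleton (I := m)).mp hm
  refine ⟨w, fun r hr => ?_⟩
  have := hIm (show r ∈ I from hr)
  simpa using this

theorem irr_transfer {A A0 : Type} [CommRing A0] [Field A] [IsAlgClosed A] {io : A →+* Om k}
    {j : A0 →+* A} {h : ℕ → A0 →+* k} (hh : germHom h = io.comp j)
    (f : A0[X][X]) (hf : f.Monic) (hirr : Irreducible (f.map (mapRingHom j))) :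
    ∀ᶠ N in (W : Filter ℕ), Irreducible (f.map (mapRingHom (h N))) := by
  classical
  by_contra hcon
  rw [← Ultrafilter.eventually_not] at hcon
  have hA0 : Nontrivial A0 := j.domain_nontrivial
  obtain ⟨e, he⟩ : ∃ e, ∀ i, (f.coeff i).natDegree < e := by
    refine ⟨(f.support.sup fun i => (f.coeff i).natDegree) + 1, fun i => ?_⟩
    by_cases hi : i ∈ f.support
    · exact Nat.lt_succ_of_le (Finset.le_sup (f := fun i => (f.coeff i).natDegree) hi)
    · rw [notMem_support_iff.mp hi]; simp
  have hnd : ∀ N, (f.map (mapRingHom (h N))).natDegree = f.natDegree := fun N => hf.natDegree_map _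
  have hf1 : 0 < f.natDegree := by
    rcases Nat.eq_zero_or_pos f.natDegree with h0 | h0
    · exfalso
      rw [hf.natDegree_eq_zero.mp h0] at hirr
      simp at hirr
    · exact h0
  have key : ∀ᶠ N in (W : Filter ℕ), ∃ ab : Fin (f.natDegree + 1) × Fin (f.natDegree + 1),
      ∃ (v : Fin ab.1 × Fin e → k) (w : Fin ab.2 × Fin e → k), 0 < (ab.1 : ℕ) ∧ 0 < (ab.2 : ℕ) ∧
        Gen v * Gen w = f.map (mapRingHom (h N)) := by
    filter_upwards [hcon] with N hN
    have hmon : (f.map (mapRingHom (h N))).Monic := hf.map _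
    rw [hmon.irreducible_iff_natDegree] at hN
    push Not at hN
    have h1 : f.map (mapRingHom (h N)) ≠ 1 := by
      intro h1
      have := hnd N
      rw [h1, natDegree_one] at this
      omega
    obtain ⟨g, g', hg, hg', hgg, h2, h3⟩ := hN h1
    have hdeg : g.natDegree + g'.natDegree = f.natDegree := by
      rw [← hg.natDegree_mul hg', hgg, hnd]
    have hce : ∀ i, ((f.map (mapRingHom (h N))).coeff i).natDegree ≤ e - 1 := by
      intro i
      rw [coeff_map, coe_mapRingHom]
      refine natDegree_map_le.trans ?_
      have := he i; omega
    have he0 := he 0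
    have hgl : ∀ i, (g.coeff i).natDegree < e := fun i => by
      have := factor_degree hmon.ne_zero hgg hce i
      omega
    have hgl' : ∀ i, (g'.coeff i).natDegree < e := fun i => by
      have := factor_degree hmon.ne_zero ((mul_comm _ _).trans hgg) hce i
      omega
    refine ⟨(⟨g.natDegree, by omega⟩, ⟨g'.natDegree, by omega⟩),
      fun x => (g.coeff x.1).coeff x.2, fun x => (g'.coeff x.1).coeff x.2,
      by simp; omega, by simp; omega, ?_⟩
    rw [← hgg]
    exact congrArg₂ (· * ·) (Gen_surj hg hgl).symm (Gen_surj hg' hgl').symm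
  rw [Ultrafilter.eventually_exists_iff] at key
  obtain ⟨⟨a, b⟩, key⟩ := key
  simp only at key
  obtain ⟨N0, hN0⟩ := key.exists
  obtain ⟨-, -, ha, hb, -⟩ := hN0
  have : ∃ (v : ℕ → Fin a × Fin e → k) (w : ℕ → Fin b × Fin e → k), ∀ᶠ N in (W : Filter ℕ),
      Gen (v N) * Gen (w N) = f.map (mapRingHom (h N)) := by
    have h2 : ∀ N, ∃ (v : Fin a × Fin e → k) (w : Fin b × Fin e → k),
        (∃ (v : Fin a × Fin e → k) (w : Fin b × Fin e → k), 0 < (a : ℕ) ∧ 0 < (b : ℕ) ∧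
        Gen v * Gen w = f.map (mapRingHom (h N))) → Gen v * Gen w = f.map (mapRingHom (h N)) := by
      intro N
      by_cases hN : (∃ (v : Fin a × Fin e → k) (w : Fin b × Fin e → k), 0 < (a : ℕ) ∧ 0 < (b : ℕ) ∧
        Gen v * Gen w = f.map (mapRingHom (h N)))
      · obtain ⟨v, w, -, -, h3⟩ := hN
        exact ⟨v, w, fun _ => h3⟩
      · exact ⟨0, 0, fun h => absurd h hN⟩
    choose v w hvw using h2
    exact ⟨v, w, key.mono fun N hN => hvw N hN⟩
  obtain ⟨v, w, hvw⟩ := this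
  -- universal factorisation
  let H : ℕ → (MvPolynomial ((Fin a × Fin e) ⊕ (Fin b × Fin e)) A0) →+* k := fun N => MvPolynomial.eval₂Hom (h N) (Sum.elim (v N) (w N))
  let G1 : (MvPolynomial ((Fin a × Fin e) ⊕ (Fin b × Fin e)) A0)[X][X] := Gen (fun x => MvPolynomial.X (Sum.inl x))
  let G2 : (MvPolynomial ((Fin a × Fin e) ⊕ (Fin b × Fin e)) A0)[X][X] := Gen (fun x => MvPolynomial.X (Sum.inr x))
  let rel : (MvPolynomial ((Fin a × Fin e) ⊕ (Fin b × Fin e)) A0)[X][X] := G1 * G2 - f.map (mapRingHom MvPolynomial.C)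
  have hrel : ∀ᶠ N in (W : Filter ℕ), rel.map (mapRingHom (H N)) = 0 := by
    filter_upwards [hvw] with N hN
    simp only [rel, G1, G2]
    rw [Polynomial.map_sub, Polynomial.map_mul, Gen_map, Gen_map, Polynomial.map_map, sub_eq_zero]
    have e1 : (⇑(H N) ∘ fun x : Fin a × Fin e => MvPolynomial.X (Sum.inl x)) = v N := by
      funext x; simp [H]
    have e2 : (⇑(H N) ∘ fun x : Fin b × Fin e => MvPolynomial.X (Sum.inr x)) = w N := by
      funext x; simp [H]
    have e3 : (mapRingHom (H N)).comp (mapRingHom MvPolynomial.C) = mapRingHom (h N) := by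
      rw [mapRingHom_comp]
      congr 1
      ext x; simp [H]
    rw [e1, e2, e3, hN]
  letI : Algebra A (Om k) := io.toAlgebra
  obtain ⟨z, hz⟩ := exists_spec (A := A) (T := Om k) (σ := ((Fin a × Fin e) ⊕ (Fin b × Fin e)))
    (fun x => ((fun N => Sum.elim (v N) (w N) x : ℕ → k) : Om k))
  have hgen : ∀ r : (MvPolynomial ((Fin a × Fin e) ⊕ (Fin b × Fin e)) A0), germHom H r = MvPolynomial.aeval (R := A)
      (fun x => ((fun N => Sum.elim (v N) (w N) x : ℕ → k) : Om k)) (MvPolynomial.map j r) := by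
    intro r
    have : germHom H = ((MvPolynomial.aeval (R := A)
      (fun x => ((fun N => Sum.elim (v N) (w N) x : ℕ → k) : Om k))).toRingHom).comp (MvPolynomial.map j) := by
      apply MvPolynomial.ringHom_ext
      · intro x
        have e1 : germHom H (MvPolynomial.C x) = germHom h x := by
          rw [germHom_apply, germHom_apply]
          simp [H]
        rw [e1, hh]
        simp [RingHom.algebraMap_toAlgebra]
      · intro x
        rw [germHom_apply]
        simp [H]
    rw [this]; rfl
  let Hz : (MvPolynomial ((Fin a × Fin e) ⊕ (Fin b × Fin e)) A0) →+* A := MvPolynomial.eval₂Hom j z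
  have hrelz : rel.map (mapRingHom Hz) = 0 := by
    ext i l
    rw [coeff_map, coe_mapRingHom, coeff_map]
    have h1 : germHom H ((rel.coeff i).coeff l) = 0 := by
      rw [germHom_eq_zero]
      filter_upwards [hrel] with N hN
      have := congrArg (fun q => (q.coeff i).coeff l) hN
      simpa using this
    rw [hgen] at h1
    have h2 := hz _ h1
    rw [MvPolynomial.aeval_def, MvPolynomial.eval₂_map] at h2
    simpa [Hz] using h2
  simp only [rel, G1, G2] at hrelz
  rw [Polynomial.map_sub, Polynomial.map_mul, Gen_map, Gen_map, Polynomial.map_map, sub_eq_zero] at hrelz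
  have e3 : (mapRingHom Hz).comp (mapRingHom MvPolynomial.C) = mapRingHom j := by
    rw [mapRingHom_comp]
    congr 1
    ext x; simp [Hz]
  rw [e3] at hrelz
  rw [(hf.map (mapRingHom j)).irreducible_iff_natDegree] at hirr
  have := hirr.2 _ _ (Gen_monic _) (Gen_monic _) hrelz
  rw [Gen_natDegree, Gen_natDegree] at this
  omega
end Irr
end AxPer

namespace AxPer
open Polynomial Module Filter

/-- evaluation of a bivariate polynomial -/
noncomputable def ev {A0 k : Type*} [CommRing A0] [CommRing k] (h : A0 →+* k) (a b : k) : A0[X][X] →+* k :=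
  eval₂RingHom (eval₂RingHom h a) b

lemma ev_C {A0 k : Type*} [CommRing A0] [CommRing k] (h : A0 →+* k) (a b : k) (u : A0[X]) :
    ev h a b (C u) = eval₂ h a u := by simp [ev]

lemma ev_X {A0 k : Type*} [CommRing A0] [CommRing k] (h : A0 →+* k) (a b : k) :
    ev h a b X = b := by simp [ev]

lemma ev_map {A0 A1 k : Type*} [CommRing A0] [CommRing A1] [CommRing k] (h : A0 →+* A1) (h' : A1 →+* k)
    (a b : k) (u : A0[X][X]) :
    ev h' a b (u.map (mapRingHom h)) = ev (h'.comp h) a b u := by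
  have : (ev h' a b).comp (mapRingHom (mapRingHom h)) = ev (h'.comp h) a b := by
    ext <;> simp [ev]
  rw [← this]; rfl

section Level
variable {k : Type} [Field k]

lemma P_mk {g : k[X][X]} (P : AdjoinRoot g →ₐ[k] k) (u : k[X][X]) :
    P (AdjoinRoot.mk g u) = ev (RingHom.id k) (P (algebraMap k[X] (AdjoinRoot g) X)) (P (AdjoinRoot.root g)) u := by
  have : (P : AdjoinRoot g →+* k).comp (AdjoinRoot.mk g) = 
      ev (RingHom.id k) (P (algebraMap k[X] (AdjoinRoot g) X)) (P (AdjoinRoot.root g)) := by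
    ext x
    · have e : AdjoinRoot.mk g (C (C x)) = algebraMap k _ x := rfl
      simp only [RingHom.comp_apply, RingHom.coe_coe, e, AlgHom.commutes]
      simp [ev]
    · simp only [RingHom.comp_apply, RingHom.coe_coe]
      simp [ev]
    · simp [ev]
  rw [← this]; rfl

lemma ev_id (a b : k) (u : k[X][X]) : ev (RingHom.id k) a b u = (u.map (evalRingHom a)).eval b := by
  have : ev (RingHom.id k) a b = (evalRingHom b).comp (mapRingHom (evalRingHom a)) := by
    ext <;> simp [ev]
  rw [this]; rfl

lemma dvd_spec (g : k[X][X]) (a : k) (u : k[X][X]) :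
    algebraMap k[X] (AdjoinRoot g) (X - C a) ∣
      AdjoinRoot.mk g u - AdjoinRoot.mk g ((u.map (evalRingHom a)).map C) := by
  rw [← map_sub]
  have : (C (X - C a) : k[X][X]) ∣ u - ((u.map (evalRingHom a)).map C) := by
    rw [C_dvd_iff_dvd_coeff]
    intro i
    simp only [coeff_sub, coeff_map, coe_evalRingHom]
    exact X_sub_C_dvd_sub_C_eval
  exact map_dvd (AdjoinRoot.mk g) this

lemma unram_of_sep {g : k[X][X]} (P : AdjoinRoot g →ₐ[k] k)
    (hs : (g.map (evalRingHom (P (algebraMap k[X] (AdjoinRoot g) X)))).Separable) : Unram P := by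
  set a := P (algebraMap k[X] (AdjoinRoot g) X) with ha
  set b := P (AdjoinRoot.root g) with hb
  set F := g.map (evalRingHom a) with hF
  have hroot : F.eval b = 0 := by
    rw [hF, ← ev_id, ha, hb, ← P_mk, AdjoinRoot.mk_self, map_zero]
  obtain ⟨e, he⟩ := dvd_iff_isRoot.mpr hroot
  have heb : e.eval b ≠ 0 := by
    intro h0
    obtain ⟨u, v, huv⟩ := hs
    have := congrArg (eval b) huv
    rw [he] at this
    simp [h0] at this
  refine ⟨AdjoinRoot.mk g (e.map C), ?_, ?_⟩
  · rw [P_mk, ev_id, Polynomial.map_map]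
    have : (evalRingHom (P (algebraMap k[X] (AdjoinRoot g) X))).comp C = RingHom.id k := by
      ext; simp
    rw [this, Polynomial.map_id]
    exact heb
  · intro u hu
    obtain ⟨U, rfl⟩ := AdjoinRoot.mk_surjective u
    rw [P_mk, ev_id] at hu
    obtain ⟨V, hV⟩ := dvd_iff_isRoot.mpr hu
    have h1 := dvd_spec g a U
    have h2 := dvd_spec g a g
    rw [AdjoinRoot.mk_self, zero_sub, dvd_neg] at h2
    have h3 : AdjoinRoot.mk g ((U.map (evalRingHom a)).map C) * AdjoinRoot.mk g (e.map C)
        = AdjoinRoot.mk g ((g.map (evalRingHom a)).map C) * AdjoinRoot.mk g (V.map C) := by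
      rw [← map_mul, ← map_mul, ← Polynomial.map_mul, ← Polynomial.map_mul, ← hF, he]
      congr 2
      rw [show U.map (evalRingHom a) = _ from hV]
      ring
    have h4 : AdjoinRoot.mk g U * AdjoinRoot.mk g (e.map C) = 
      (AdjoinRoot.mk g U - AdjoinRoot.mk g ((U.map (evalRingHom a)).map C)) * AdjoinRoot.mk g (e.map C)
       + AdjoinRoot.mk g ((g.map (evalRingHom a)).map C) * AdjoinRoot.mk g (V.map C) := by
      rw [← h3]; ring
    rw [h4]
    exact dvd_add (Dvd.dvd.mul_right h1 _) (Dvd.dvd.mul_right h2 _)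

lemma exists_pts [IsAlgClosed k] {g : k[X][X]} (hg : g.Monic) {m : ℕ} (hm : g.natDegree = m) (a : k)
    (hs : (g.map (evalRingHom a)).Separable) : ∃ P : Fin m → (AdjoinRoot g →ₐ[k] k), 
      Function.Injective P ∧ ∀ i, P i (algebraMap k[X] (AdjoinRoot g) X) = a := by
  classical
  set F := g.map (evalRingHom a) with hF
  have hFm : F.natDegree = m := by rw [← hm]; exact hg.natDegree_map _
  have hcard : F.roots.toFinset.card = m := by
    rw [Multiset.toFinset_card_of_nodup (nodup_roots hs), ← hFm]
    exact (splits_iff_card_roots.mp (IsAlgClosed.splits F))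
  have hF0 : F ≠ 0 := (hg.map _).ne_zero
  let r : Fin m → k := fun i => (F.roots.toFinset.equivFinOfCardEq hcard).symm i
  have hr : ∀ i, F.eval (r i) = 0 := by
    intro i
    have : r i ∈ F.roots.toFinset := ((F.roots.toFinset.equivFinOfCardEq hcard).symm i).2
    rw [Multiset.mem_toFinset, mem_roots hF0] at this
    exact this
  have hri : Function.Injective r := fun i j h => 
    (F.roots.toFinset.equivFinOfCardEq hcard).symm.injective (Subtype.ext h)
  have hz : ∀ i, g.eval₂ (aeval a : k[X] →ₐ[k] k) (r i) = 0 := by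
    intro i
    rw [← hr i, hF, eval_map]
    congr 1
  refine ⟨fun i => AdjoinRoot.liftAlgHom g (aeval a) (r i) (hz i), ?_, ?_⟩
  · intro i j h
    apply hri
    have := congrArg (fun (P : AdjoinRoot g →ₐ[k] k) => P (AdjoinRoot.root g)) h
    simpa using this
  · intro i
    rw [AdjoinRoot.algebraMap_eq]
    simp
end Level
end AxPer

namespace AxPer
open Polynomial Module Filter

lemma exists_bd {A0 : Type*} [CommRing A0] (f : A0[X][X]) {ι : Type*} [Finite ι]
    (u : ι → A0[X][X]) : ∃ c : ℕ, ∀ i l, ((u i %ₘ f).coeff l).natDegree < c := by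
  classical
  cases nonempty_fintype ι
  refine ⟨(Finset.univ.sup fun i => ((u i %ₘ f).support.sup fun l => ((u i %ₘ f).coeff l).natDegree)) + 1,
    fun i l => Nat.lt_succ_of_le ?_⟩
  by_cases hl : l ∈ (u i %ₘ f).support
  · exact (Finset.le_sup (f := fun l => ((u i %ₘ f).coeff l).natDegree) hl).trans
      (Finset.le_sup (f := fun i => ((u i %ₘ f).support.sup fun l => ((u i %ₘ f).coeff l).natDegree))
        (Finset.mem_univ i))
  · rw [notMem_support_iff.mp hl]; simp

theorem level (p : ℕ) [hp : Fact p.Prime] {k A0 : Type} [Field k] [IsAlgClosed k] [CharP k p] [CommRing A0]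
    (f : A0[X][X]) (hf : f.Monic) (hfd : 0 < f.natDegree) {n : ℕ} (S : Fin n → A0[X][X])
    (Z : Fin n → Fin n → A0[X][X]) (de : A0[X][X])
    (T : Fin n → ℕ → A0[X]) (δ D : A0[X])
    (hT : ∀ i j, ∑ l ∈ Finset.range f.natDegree, (S j %ₘ f).coeff l * T i l = if i = j then δ else 0)
    (hD : ∃ u v, u * f + v * derivative f = C D) :
    ∃ k0, ∀ κ, k0 ≤ κ → ∀ h : A0 →+* k, Irreducible (f.map (mapRingHom h)) → δ.map h ≠ 0 →
      D.map h ≠ 0 → ∀ (E : Fin n → k → k → Prop),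
      (∀ a b, ev h a b f = 0 → eval₂ h a D ≠ 0 → ev h a b de ≠ 0) →
      (∀ a b, ev h a b f = 0 → eval₂ h a D ≠ 0 → a ^ p ^ κ = a → ∃ i, E i a b) →
      (∀ i a b, ev h a b f = 0 → eval₂ h a D ≠ 0 → a ^ p ^ κ = a → E i a b →
        ∀ j, ev h a b de * ev h a b (S j) ^ p ^ κ = ev h a b (Z i j)) →
      ∀ i0, ∃ a b, ev h a b f = 0 ∧ eval₂ h a D ≠ 0 ∧ a ^ p ^ κ = a ∧ E i0 a b := by
  classical
  set m := f.natDegree with hm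
  obtain ⟨c1, hc1⟩ := exists_bd f (fun x : Fin m × Fin m => (X ^ ((x.1 : ℕ) + x.2) : A0[X][X]))
  obtain ⟨c2, hc2⟩ := exists_bd f S
  obtain ⟨c3, hc3⟩ := exists_bd f (fun x : Fin n × Fin n => Z x.1 x.2)
  set c := c1 + c2 + c3 + D.natDegree with hc
  refine ⟨3 * (m * (4 * c + 3) + n * n * (3 * c + 3) + 1), ?_⟩
  intro κ hκ h hirr hδ hD0 E hde hcov hE i0
  set g := f.map (mapRingHom h) with hgdef
  have hg : g.Monic := hf.map _
  have hgm : g.natDegree = m := hf.natDegree_map _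
  have hdom : IsDomain (AdjoinRoot g) := AdjoinRoot.isDomain_of_prime hirr.prime
  let b : Basis (Fin m) k[X] (AdjoinRoot g) := (AdjoinRoot.powerBasisAux' hg).reindex (finCongr hgm)
  have hrepr : ∀ (u : A0[X][X]) (i : Fin m), b.repr (AdjoinRoot.mk g (u.map (mapRingHom h))) i
      = ((u %ₘ f).coeff i).map h := by
    intro u i
    simp only [b, Basis.repr_reindex_apply]
    rw [AdjoinRoot.powerBasisAux'_repr_apply_to_fun, AdjoinRoot.modByMonicHom_mk]
    have e : u.map (mapRingHom h) %ₘ g = (u %ₘ f).map (mapRingHom h) := by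
      rw [hgdef, map_modByMonic _ hf]
    rw [e, coeff_map]
    rfl
  have hU : ∀ (u : A0[X][X]) (c' : ℕ), c' ≤ c → (∀ l, ((u %ₘ f).coeff l).natDegree < c') →
      AdjoinRoot.mk g (u.map (mapRingHom h)) ∈ U b c := by
    intro u c' hc' hl i
    rw [hrepr]
    rw [mem_degreeLT]
    refine degree_le_natDegree.trans_lt ?_
    have := (natDegree_map_le (p := (u %ₘ f).coeff i) (f := h)).trans_lt (hl i)
    exact_mod_cast this.trans_le hc'
  have hbi : ∀ i, b i = AdjoinRoot.mk g (X ^ (i : ℕ)) := by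
    intro i
    have := (AdjoinRoot.powerBasis' hg).coe_basis
    simp only [b, Basis.reindex_apply]
    have h2 := congrFun this ((finCongr hgm).symm i)
    have h3 : (AdjoinRoot.powerBasis' hg).gen = AdjoinRoot.root g := rfl
    rw [h3] at h2
    rw [map_pow, AdjoinRoot.mk_X]
    exact h2
  have hb : ∀ i j, b i * b j ∈ U b c := by
    intro i j
    rw [hbi, hbi, ← map_mul, ← pow_add]
    have := hU (X ^ ((i : ℕ) + j)) c1 (by omega) (fun l => hc1 (i, j) l)
    simpa using this
  have hPev : ∀ (P : AdjoinRoot g →ₐ[k] k) (u : A0[X][X]), P (AdjoinRoot.mk g (u.map (mapRingHom h)))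
      = ev h (P (algebraMap k[X] (AdjoinRoot g) X)) (P (AdjoinRoot.root g)) u := by
    intro P u
    rw [P_mk, ev_map, RingHom.id_comp]
  have hPf : ∀ (P : AdjoinRoot g →ₐ[k] k),
      ev h (P (algebraMap k[X] (AdjoinRoot g) X)) (P (AdjoinRoot.root g)) f = 0 := by
    intro P
    rw [← hPev, ← hgdef, AdjoinRoot.mk_self, map_zero]
  have hsep : ∀ a : k, (D.map h).eval a ≠ 0 → (g.map (evalRingHom a)).Separable := by
    intro a ha
    obtain ⟨u, v, huv⟩ := hD
    let ψ : A0[X] →+* k := (evalRingHom a).comp (mapRingHom h)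
    have h1 : g.map (evalRingHom a) = f.map ψ := by rw [hgdef, Polynomial.map_map]
    have h2 := congrArg (Polynomial.map ψ) huv
    simp only [Polynomial.map_add, Polynomial.map_mul, map_C] at h2
    rw [h1]
    have hψ : ψ D ≠ 0 := ha
    refine ⟨C (ψ D)⁻¹ * u.map ψ, C (ψ D)⁻¹ * v.map ψ, ?_⟩
    rw [derivative_map, mul_assoc, mul_assoc, ← mul_add, h2, ← C_mul, inv_mul_cancel₀ hψ, C_1]
  have hevD : ∀ a, eval₂ h a D = (D.map h).eval a := fun a => (eval_map h a).symm
  have hS : LinearIndependent k[X] (fun j => AdjoinRoot.mk g ((S j).map (mapRingHom h))) := by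
    rw [Fintype.linearIndependent_iff]
    intro cc h0 i
    have h1 : ∀ l : Fin m, ∑ j, cc j * (((S j) %ₘ f).coeff l).map h = 0 := by
      intro l
      have := congrArg (fun z => b.repr z l) h0
      simp only [map_sum, map_smul, Finsupp.coe_finsetSum, Finset.sum_apply, Finsupp.smul_apply,
        smul_eq_mul, map_zero, Finsupp.zero_apply, hrepr] at this
      exact this
    have h2 : ∑ l : Fin m, (T i l).map h * ∑ j, cc j * (((S j) %ₘ f).coeff l).map h = 0 :=
      Finset.sum_eq_zero fun l _ => by rw [h1, mul_zero]
    have h3 : ∑ l : Fin m, (T i l).map h * ∑ j, cc j * (((S j) %ₘ f).coeff l).map h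
        = ∑ j, cc j * (if i = j then δ else 0).map h := by
      simp_rw [Finset.mul_sum]
      rw [Finset.sum_comm]
      refine Finset.sum_congr rfl fun j _ => ?_
      rw [← hT i j, Finset.sum_range, Polynomial.map_sum, Finset.mul_sum]
      refine Finset.sum_congr rfl fun l _ => ?_
      rw [Polynomial.map_mul]
      ring
    rw [h3, Finset.sum_eq_single i] at h2
    · simp only [if_true] at h2
      exact (mul_eq_zero.mp h2).resolve_right hδ
    · intro j _ hj
      rw [if_neg (Ne.symm hj)]; simp
    · simp
  obtain ⟨P, ⟨hP1, -⟩, hP2, hP3⟩ := thmC p hfd hκ b hb (fun j => AdjoinRoot.mk g ((S j).map (mapRingHom h)))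
    (fun i j => AdjoinRoot.mk g ((Z i j).map (mapRingHom h))) hS
    (fun j => hU _ c2 (by omega) (hc2 j)) (fun i j => hU _ c3 (by omega) (hc3 (i, j)))
    (AdjoinRoot.mk g (de.map (mapRingHom h))) (D.map h) hD0
    (natDegree_map_le.trans (by omega))
    (fun a ha => exists_pts hg hgm a (hsep a ha))
    (fun P hP => ⟨unram_of_sep P (hsep _ hP), by
      rw [hPev]; exact hde _ _ (hPf P) (by rw [hevD]; exact hP)⟩)
    (fun i => {P | E i (P (algebraMap k[X] (AdjoinRoot g) X)) (P (AdjoinRoot.root g)) ∧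
      (D.map h).eval (P (algebraMap k[X] (AdjoinRoot g) X)) ≠ 0 ∧ 
      P (algebraMap k[X] (AdjoinRoot g) X) ^ p ^ κ = P (algebraMap k[X] (AdjoinRoot g) X)})
    (fun P h1 h2 => by
      obtain ⟨i, hi⟩ := hcov _ _ (hPf P) (by rw [hevD]; exact h1) h2
      exact ⟨i, hi, h1, h2⟩)
    (by
      rintro i P ⟨h1, h2, h3⟩ j
      rw [hPev, hPev, hPev]
      exact hE i _ _ (hPf P) (by rw [hevD]; exact h2) h3 h1 j) i0
  exact ⟨_, _, hPf P, by rw [hevD]; exact hP3, hP2, hP1⟩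
end AxPer

namespace AxPer
open Polynomial Module Filter

section Alg
variable {R F B : Type} [CommRing R] [IsDomain R] [Field F] [Field B] [Algebra R F] [IsFractionRing R F]
  [Algebra F B] [Algebra R B] [IsScalarTower R F B]

lemma exists_num (F : Type) [Field F] [Algebra R F] [IsFractionRing R F] (P : F[X]) :
    ∃ (c : R) (u : R[X]), c ≠ 0 ∧ u.map (algebraMap R F) = C (algebraMap R F c) * P := by
  obtain ⟨b, hb, hb2⟩ := IsLocalization.integerNormalization_spec (nonZeroDivisors R) P
  refine ⟨b, IsLocalization.integerNormalization (nonZeroDivisors R) P, nonZeroDivisors.ne_zero hb, ?_⟩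
  rw [hb2, ← smul_eq_C_mul, algebraMap_smul]

lemma bez (F : Type) [Field F] [Algebra R F] [IsFractionRing R F] (g : R[X])
    (hg : (g.map (algebraMap R F)).Separable) :
    ∃ (u v : R[X]) (c : R), c ≠ 0 ∧ u * g + v * derivative g = C c := by
  obtain ⟨a, b, hab⟩ := hg
  obtain ⟨c1, u, hc1, hu⟩ := exists_num (R := R) F a
  obtain ⟨c2, v, hc2, hv⟩ := exists_num (R := R) F b
  refine ⟨C c2 * u, C c1 * v, c1 * c2, mul_ne_zero hc1 hc2, ?_⟩
  apply map_injective _ (IsFractionRing.injective R F)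
  simp only [Polynomial.map_add, Polynomial.map_mul, map_C, hu, hv, ← derivative_map, map_mul]
  linear_combination (C ((algebraMap R F) c1) * C ((algebraMap R F) c2)) * hab

lemma exists_den {w : B} (hw : IsIntegral F w) (V : Finset B)
    (hV : ∀ x ∈ V, x ∈ IntermediateField.adjoin F {w}) :
    ∃ c : R, c ≠ 0 ∧ ∀ x ∈ V, ∃ u : R[X], aeval w u = algebraMap R B c * x := by
  classical
  have key : ∀ x ∈ V, ∃ c : R, c ≠ 0 ∧ ∃ u : R[X], aeval w u = algebraMap R B c * x := by
    intro x hx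
    have h1 := hV x hx
    rw [← IntermediateField.mem_toSubalgebra, IntermediateField.adjoin_simple_toSubalgebra_of_isAlgebraic hw.isAlgebraic,
      Algebra.adjoin_singleton_eq_range_aeval] at h1
    obtain ⟨P, hP⟩ := h1
    obtain ⟨c, u, hc, hu⟩ := exists_num (R := R) F P
    refine ⟨c, hc, u, ?_⟩
    rw [← aeval_map_algebraMap F, hu, map_mul, aeval_C, ← IsScalarTower.algebraMap_apply]
    congr 1
  choose! c hc hu using key
  refine ⟨∏ x ∈ V, c x, Finset.prod_ne_zero_iff.mpr hc, fun x hx => ?_⟩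
  obtain ⟨u, hux⟩ := hu x hx
  refine ⟨C (∏ y ∈ V.erase x, c y) * u, ?_⟩
  rw [map_mul, aeval_C, hux, ← mul_assoc, ← map_mul, Finset.prod_erase_mul _ _ hx]

lemma exists_prim [Infinite F] (T : Finset B) (hT : ∀ t ∈ T, IsSeparable F t) :
    ∃ y : B, IsIntegral R y ∧ IsSeparable F y ∧ ∀ t ∈ T, t ∈ IntermediateField.adjoin F {y} := by
  have h1 : Algebra.IsSeparable F (IntermediateField.adjoin F (T : Set B)) :=
    (IntermediateField.isSeparable_adjoin_iff_isSeparable F B).mpr hT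
  have h2 : FiniteDimensional F (IntermediateField.adjoin F (T : Set B)) :=
    IntermediateField.finiteDimensional_adjoin fun t ht => (hT t ht).isIntegral
  obtain ⟨y0, hy0⟩ := Field.exists_primitive_element F (IntermediateField.adjoin F (T : Set B))
  have h3 : IntermediateField.adjoin F {(y0 : B)} = IntermediateField.adjoin F (T : Set B) := by
    have := congrArg (IntermediateField.map (IntermediateField.adjoin F (T : Set B)).val) hy0
    rw [IntermediateField.adjoin_map, ← AlgHom.fieldRange_eq_map,
      IntermediateField.fieldRange_val] at this
    simpa using this
  have hsy : IsSeparable F (y0 : B) := by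
    have := Algebra.IsSeparable.isSeparable F y0
    have h4 : minpoly F y0 = minpoly F (y0 : B) := (minpoly.algebraMap_eq (Subtype.val_injective) y0).symm
    unfold IsSeparable at this ⊢
    rwa [h4] at this
  have halg : IsAlgebraic R (y0 : B) := by
    have := hsy.isIntegral.isAlgebraic
    exact (IsFractionRing.isAlgebraic_iff R F B).mpr this
  obtain ⟨c, hc, hcy⟩ := halg.exists_integral_multiple
  have hc' : algebraMap R F c ≠ 0 := by
    simpa using (IsFractionRing.injective R F).ne hc
  have e : c • (y0 : B) = algebraMap F B (algebraMap R F c) * y0 := by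
    rw [Algebra.smul_def, IsScalarTower.algebraMap_apply R F B]
  have hcB : algebraMap F B (algebraMap R F c) ≠ 0 := by simpa using hc'
  refine ⟨c • (y0 : B), hcy, ?_, ?_⟩
  · rw [e]
    exact Field.isSeparable_mul (isSeparable_algebraMap _) hsy
  · intro t ht
    have h5 : t ∈ IntermediateField.adjoin F (T : Set B) := IntermediateField.subset_adjoin _ _ ht
    rw [← h3] at h5
    refine (IntermediateField.adjoin_le_iff.mpr ?_ : IntermediateField.adjoin F {(y0 : B)} ≤ _) h5
    rintro _ rfl
    have h6 : c • (y0 : B) ∈ IntermediateField.adjoin F {c • (y0 : B)} := IntermediateField.mem_adjoin_simple_self _ _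
    have h7 := mul_mem ((IntermediateField.adjoin F {c • (y0 : B)}).algebraMap_mem (algebraMap R F c)⁻¹) h6
    rw [e, map_inv₀, inv_mul_cancel_left₀ hcB] at h7
    rwa [e]

lemma exists_dual' {n m : ℕ} (w : B) (S : Fin n → R[X]) (hS : ∀ j, (S j).natDegree < m)
    (hli : LinearIndependent F (fun j => aeval w (S j))) :
    ∃ (T : Fin n → ℕ → R) (δ : R), δ ≠ 0 ∧
      ∀ i j, ∑ l ∈ Finset.range m, (S j).coeff l * T i l = if i = j then δ else 0 := by
  classical
  obtain ⟨g, hg⟩ := LinearMap.exists_leftInverse_of_injective (Fintype.linearCombination F (fun j => aeval w (S j)))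
    (LinearMap.ker_eq_bot.mpr hli.fintypeLinearCombination_injective)
  obtain ⟨δ, hδ⟩ := IsLocalization.exist_integer_multiples_of_finset (nonZeroDivisors R)
    ((Finset.univ ×ˢ Finset.range m).image fun x : Fin n × ℕ => g (w ^ x.2) x.1)
  have h1 : ∀ i l, l ∈ Finset.range m → ∃ a : R, algebraMap R F a = algebraMap R F δ * g (w ^ l) i := by
    intro i l hl
    obtain ⟨a, ha⟩ := hδ _ (Finset.mem_image_of_mem _ (Finset.mem_product.mpr ⟨Finset.mem_univ i, hl⟩ : (i, l) ∈ _))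
    exact ⟨a, by rw [ha, ← Algebra.smul_def]⟩
  choose! T hT using h1
  refine ⟨T, δ, nonZeroDivisors.coe_ne_zero δ, fun i j => ?_⟩
  apply IsFractionRing.injective R F
  rw [map_sum]
  have h2 : aeval w (S j) = ∑ l ∈ Finset.range m, (algebraMap R F ((S j).coeff l)) • w ^ l := by
    rw [aeval_eq_sum_range' (hS j)]
    simp [Algebra.smul_def, ← IsScalarTower.algebraMap_apply]
  have h3 : g (aeval w (S j)) = Pi.single j 1 := by
    have := LinearMap.congr_fun hg (Pi.single j 1)
    simpa using this
  have h4 : ∑ l ∈ Finset.range m, algebraMap R F ((S j).coeff l) * g (w ^ l) i = (Pi.single j 1 : Fin n → F) i := by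
    rw [← h3, h2, map_sum, Finset.sum_apply]
    exact Finset.sum_congr rfl fun l _ => by rw [map_smul]; rfl
  calc _ = algebraMap R F δ * ∑ l ∈ Finset.range m, algebraMap R F ((S j).coeff l) * g (w ^ l) i := by
        rw [Finset.mul_sum]
        refine Finset.sum_congr rfl fun l hl => ?_
        rw [map_mul, hT i l hl]; ring
    _ = _ := by
        rw [h4, Pi.single_apply]
        split_ifs <;> simp

end Alg
end AxPer

namespace AxPer
open Polynomial Module Filter

lemma exists_enum {B : Type} {n : ℕ} (s : Multiset B) (hs : s.card = n) :
    ∃ z : Fin n → B, Multiset.map z Finset.univ.val = s := by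
  subst hs
  induction s using Quotient.inductionOn with | _ l
  refine ⟨l.get, ?_⟩
  change Multiset.map l.get (Finset.univ : Finset (Fin l.length)).val = (l : Multiset B)
  rw [Fin.univ_val_map]
  simp [List.ofFn_get]

/-- algebraic data attached to a finite set of separable elements -/
structure AlgData {R B : Type} [CommRing R] [Field B] [Algebra R B] (τR : R →+* R) (τB : B →+* B)
    (T : Finset B) where
  y : B
  w : B
  f : R[X]
  g : R[X]
  n : ℕ
  z : Fin n → B
  i0 : Fin n
  V : Finset B
  d : R
  D1 : R
  δ : R
  U : B → R[X]
  G : B → R[X]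
  Tm : Fin n → ℕ → R
  u : R[X]
  v : R[X]
  hf : f.Monic
  hirr : Irreducible f
  hfd : 0 < f.natDegree
  hfw : aeval w f = 0
  hker : ∀ P : R[X], aeval w P = 0 → f ∣ P
  hgy : aeval y g = 0
  hprod : (g.map τR).map (algebraMap R B) = ∏ i, (X - C (z i))
  hi0 : τB y = z i0
  hd : d ≠ 0
  hD1 : D1 ≠ 0
  hδ : δ ≠ 0
  hbez : u * f + v * derivative f = C D1
  hG : ∀ t ∈ T, aeval y (G t) = algebraMap R B d * t
  hU : ∀ x ∈ V, aeval w (U x) = algebraMap R B d * x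
  hyV : y ∈ V
  hzV : ∀ i, z i ∈ V
  hyjV : ∀ j : Fin n, y ^ (j : ℕ) ∈ V
  hzjV : ∀ i, ∀ j : Fin n, z i ^ (j : ℕ) ∈ V
  hTV : ∀ t ∈ T, t ∈ V
  hτTV : ∀ t ∈ T, τB t ∈ V
  hTm : ∀ i j : Fin n, ∑ l ∈ Finset.range f.natDegree, (U (y ^ (j : ℕ)) %ₘ f).coeff l * Tm i l =
    if i = j then δ else 0

variable {R F B : Type} [CommRing R] [IsDomain R] [IsIntegrallyClosed R] [Field F] [Field B] [Algebra R F]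
  [IsFractionRing R F]
  [Algebra F B] [Algebra R B] [IsScalarTower R F B]

lemma exists_algData (F : Type) [Field F] [Algebra R F] [IsFractionRing R F] 
    [Algebra F B] [IsScalarTower R F B] [Infinite F] [IsAlgClosed B] (τR : R →+* R)
    (hτR : Function.Injective τR) (τB : B →+* B)
    (hτ : ∀ r, τB (algebraMap R B r) = algebraMap R B (τR r)) (T : Finset B)
    (hT : ∀ t ∈ T, IsSeparable F t) : Nonempty (AlgData τR τB T) := by
  classical
  have hRB : Function.Injective (algebraMap R B) := by
    rw [IsScalarTower.algebraMap_eq R F B]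
    exact (algebraMap F B).injective.comp (IsFractionRing.injective R F)
  have htf : IsTorsionFree R B := isTorsionFree_iff_algebraMap_injective.mpr hRB
  obtain ⟨y, hyi, hys, hyT⟩ := exists_prim (R := R) T hT
  set g := minpoly R y with hg
  have hgF : minpoly F y = g.map (algebraMap R F) := minpoly.isIntegrallyClosed_eq_field_fractions F B hyi
  have hgm : g.Monic := minpoly.monic hyi
  set n := g.natDegree with hn
  have hgsep : (g.map (algebraMap R F)).Separable := hgF ▸ hys
  have hsepτ : ((g.map τR).map (algebraMap R F)).Separable := by
    obtain ⟨a, b, c, hc, hab⟩ := bez F g hgsep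
    have h2 := congrArg (Polynomial.map ((algebraMap R F).comp τR)) hab
    simp only [Polynomial.map_add, Polynomial.map_mul, map_C, ← derivative_map] at h2
    have hc' : ((algebraMap R F).comp τR) c ≠ 0 := by
      rw [RingHom.comp_apply]
      simpa using ((IsFractionRing.injective R F).comp hτR).ne hc
    rw [Polynomial.map_map]
    refine ⟨C (((algebraMap R F).comp τR) c)⁻¹ * a.map ((algebraMap R F).comp τR),
      C (((algebraMap R F).comp τR) c)⁻¹ * b.map ((algebraMap R F).comp τR), ?_⟩
    rw [mul_assoc, mul_assoc, ← mul_add, h2, ← C_mul, inv_mul_cancel₀ hc', C_1]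
  set gB := (g.map τR).map (algebraMap R B) with hgB
  have hgBm : gB.Monic := (hgm.map _).map _
  have hgBn : gB.natDegree = n := by rw [hgB, (hgm.map _).natDegree_map, hgm.natDegree_map]
  have hspl : gB.Splits := IsAlgClosed.splits gB
  have hcard : gB.roots.card = n := by rw [← hgBn]; exact hspl.natDegree_eq_card_roots.symm
  have hgB0 : gB ≠ 0 := hgBm.ne_zero
  obtain ⟨z, hz⟩ : ∃ z : Fin n → B, Multiset.map z Finset.univ.val = gB.roots := by
    exact exists_enum _ hcard
  have hprod : gB = ∏ i, (X - C (z i)) := by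
    rw [hspl.eq_prod_roots_of_monic hgBm, ← hz, Multiset.map_map]
    rfl
  have hzr : ∀ i, gB.eval (z i) = 0 := by
    intro i
    rw [hprod, eval_prod]
    exact Finset.prod_eq_zero (Finset.mem_univ i) (by simp)
  have hzs : ∀ i, IsSeparable F (z i) := by
    intro i
    refine hsepτ.of_dvd (minpoly.dvd F (z i) ?_)
    rw [aeval_map_algebraMap, aeval_def, ← eval_map]
    exact hzr i
  have hτy : gB.eval (τB y) = 0 := by
    have h1 : aeval y g = 0 := minpoly.aeval R y
    have h2 := congrArg τB h1
    rw [aeval_def, hom_eval₂, map_zero] at h2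
    rw [hgB, Polynomial.map_map, eval_map]
    have : τB.comp (algebraMap R B) = (algebraMap R B).comp τR := by
      ext r; exact hτ r
    rwa [← this]
  obtain ⟨i0, hi0⟩ : ∃ i0, τB y = z i0 := by
    rw [hprod, eval_prod, Finset.prod_eq_zero_iff] at hτy
    obtain ⟨i, -, hi⟩ := hτy
    refine ⟨i, ?_⟩
    simpa [sub_eq_zero] using hi
  obtain ⟨w, hwi, hws, hwV⟩ := exists_prim (R := R) (F := F) (insert y (Finset.univ.image z)) (by
    intro t ht
    rw [Finset.mem_insert, Finset.mem_image] at ht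
    rcases ht with rfl | ⟨i, -, rfl⟩
    · exact hys
    · exact hzs i)
  have hwy := hwV y (Finset.mem_insert_self _ _)
  have hwz : ∀ i, z i ∈ IntermediateField.adjoin F {w} := fun i =>
    hwV _ (Finset.mem_insert_of_mem (Finset.mem_image_of_mem _ (Finset.mem_univ i)))
  obtain ⟨d1, hd1, hG0⟩ := exists_den (R := R) hys.isIntegral T hyT
  choose! G0 hG0 using hG0
  have hwFi : IsIntegral F w := hws.isIntegral
  have hle : IntermediateField.adjoin F {y} ≤ IntermediateField.adjoin F {w} := by
    rw [IntermediateField.adjoin_le_iff]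
    rintro _ rfl; exact hwy
  have hmemR : ∀ r, algebraMap R B r ∈ IntermediateField.adjoin F {w} := by
    intro r
    rw [IsScalarTower.algebraMap_apply R F B]
    exact IntermediateField.algebraMap_mem _ _
  have hτT : ∀ t ∈ T, τB t ∈ IntermediateField.adjoin F {w} := by
    intro t ht
    have h1 := congrArg τB (hG0 t ht)
    have hd1' : algebraMap R B (τR d1) ≠ 0 := by simpa using (hRB.comp hτR).ne hd1
    rw [map_mul, hτ, aeval_def, hom_eval₂, hi0] at h1
    have h2 : τB t = (algebraMap R B (τR d1))⁻¹ * eval₂ (τB.comp (algebraMap R B)) (z i0) (G0 t) := by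
      rw [h1, inv_mul_cancel_left₀ hd1']
    rw [h2]
    refine mul_mem (inv_mem (hmemR _)) ?_
    rw [eval₂_eq_sum_range]
    refine sum_mem fun l _ => mul_mem ?_ (pow_mem (hwz _) _)
    rw [RingHom.comp_apply, hτ]; exact hmemR _
  let V : Finset B := insert y (Finset.univ.image z ∪ Finset.univ.image (fun j : Fin n => y ^ (j : ℕ)) ∪
    Finset.univ.image (fun x : Fin n × Fin n => z x.1 ^ (x.2 : ℕ)) ∪ T ∪ T.image τB)
  have hV : ∀ x ∈ V, x ∈ IntermediateField.adjoin F {w} := by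
    intro x hx
    simp only [V, Finset.mem_insert, Finset.mem_union, Finset.mem_image] at hx
    rcases hx with rfl | (((⟨i, -, rfl⟩ | ⟨j, -, rfl⟩) | ⟨a, -, rfl⟩) | ht) | ⟨t, ht, rfl⟩
    · exact hwy
    · exact hwz i
    · exact pow_mem hwy _
    · exact pow_mem (hwz _) _
    · exact hle (hyT _ ht)
    · exact hτT t ht
  obtain ⟨d2, hd2, hU0⟩ := exists_den (R := R) hwFi V hV
  choose! U0 hU0 using hU0
  set f := minpoly R w with hf
  have hfm : f.Monic := minpoly.monic hwi
  have hfF : minpoly F w = f.map (algebraMap R F) := minpoly.isIntegrallyClosed_eq_field_fractions F B hwi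
  have hfw : aeval w f = 0 := minpoly.aeval R w
  obtain ⟨u, v, D1, hD1, hbez⟩ := bez F f (hfF ▸ hws)
  have hfd : 0 < f.natDegree := minpoly.natDegree_pos hwi
  have hd12 : d1 * d2 ≠ 0 := mul_ne_zero hd1 hd2
  let U : B → R[X] := fun x => C d1 * U0 x
  have hU : ∀ x ∈ V, aeval w (U x) = algebraMap R B (d1 * d2) * x := by
    intro x hx
    simp only [U]
    rw [map_mul, aeval_C, hU0 x hx, map_mul, mul_assoc]
  have hyjV : ∀ j : Fin n, y ^ (j : ℕ) ∈ V := by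
    intro j
    simp only [V, Finset.mem_insert, Finset.mem_union, Finset.mem_image]
    exact Or.inr (Or.inl (Or.inl (Or.inl (Or.inr ⟨j, Finset.mem_univ _, rfl⟩))))
  have hli : LinearIndependent F (fun j : Fin n => aeval w (U (y ^ (j : ℕ)) %ₘ f)) := by
    have h1 : ∀ j : Fin n, aeval w (U (y ^ (j : ℕ)) %ₘ f) = algebraMap F B (algebraMap R F (d1 * d2)) * y ^ (j : ℕ) := by
      intro j
      rw [aeval_modByMonic_eq_self_of_root hfw, hU _ (hyjV j), IsScalarTower.algebraMap_apply R F B]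
    have h2 : LinearIndependent F (fun j : Fin n => y ^ (j : ℕ)) := by
      have h3 := linearIndependent_pow (K := F) y
      have e : n = (minpoly F y).natDegree := by rw [hgF, hgm.natDegree_map]
      have := h3.comp (Fin.cast e) (Fin.cast_injective e)
      exact this
    have hu : IsUnit (algebraMap R F (d1 * d2)) := by
      rw [isUnit_iff_ne_zero]
      simpa using (IsFractionRing.injective R F).ne hd12
    have h4 := h2.units_smul (fun _ => hu.unit)
    convert h4 using 1
    funext j
    rw [h1, ← Algebra.smul_def]
    rfl
  obtain ⟨Tm, δ, hδ, hTm⟩ := exists_dual' (F := F) w (fun j : Fin n => U (y ^ (j : ℕ)) %ₘ f)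
    (fun j => natDegree_modByMonic_lt _ hfm (by
      intro h1; rw [h1, natDegree_one] at hfd; exact lt_irrefl _ hfd)) hli
  exact ⟨{
    y := y, w := w, f := f, g := g, n := n, z := z, i0 := i0, V := V, d := d1 * d2, D1 := D1, δ := δ
    U := U, G := fun t => C d2 * G0 t, Tm := Tm, u := u, v := v
    hf := hfm, hirr := minpoly.irreducible hwi, hfd := hfd, hfw := hfw
    hker := fun P hP => minpoly.isIntegrallyClosed_dvd hwi hP
    hgy := minpoly.aeval R y, hprod := hprod, hi0 := hi0, hd := hd12, hD1 := hD1, hδ := hδ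
    hbez := hbez
    hG := fun t ht => by rw [map_mul, aeval_C, hG0 t ht, map_mul]; ring
    hU := hU
    hyV := Finset.mem_insert_self _ _
    hzV := fun i => by
      simp only [V, Finset.mem_insert, Finset.mem_union, Finset.mem_image]
      exact Or.inr (Or.inl (Or.inl (Or.inl (Or.inl ⟨i, Finset.mem_univ _, rfl⟩))))
    hyjV := hyjV
    hzjV := fun i j => by
      simp only [V, Finset.mem_insert, Finset.mem_union, Finset.mem_image]
      exact Or.inr (Or.inl (Or.inl (Or.inr ⟨(i, j), Finset.mem_univ _, rfl⟩)))
    hTV := fun t ht => by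
      simp only [V, Finset.mem_insert, Finset.mem_union, Finset.mem_image]
      exact Or.inr (Or.inl (Or.inr ht))
    hτTV := fun t ht => by
      simp only [V, Finset.mem_insert, Finset.mem_union, Finset.mem_image]
      exact Or.inr (Or.inr ⟨t, ht, rfl⟩)
    hTm := hTm }⟩

end AxPer

namespace AxPer
open Polynomial Module Filter

lemma partial_hom {R B k : Type*} [CommRing R] [Field B] [Field k] (W0 : R →+* B) (π : R →+* k)
    (hker : ∀ P, W0 P = 0 → π P = 0) :
    ∃ (O : Subring B) (e : O →+* k), (∀ P, ∃ hP : W0 P ∈ O, e ⟨W0 P, hP⟩ = π P) ∧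
      (∀ x P v, π v ≠ 0 → W0 v * x = W0 P → x ∈ O) := by
  let O : Subring B :=
    { carrier := {x | ∃ P v, π v ≠ 0 ∧ W0 v * x = W0 P}
      one_mem' := ⟨1, 1, by simp, by simp⟩
      zero_mem' := ⟨0, 1, by simp, by simp⟩
      mul_mem' := by
        rintro x y ⟨P, v, hv, h⟩ ⟨P', v', hv', h'⟩
        refine ⟨P * P', v * v', by rw [map_mul]; exact mul_ne_zero hv hv', ?_⟩
        rw [map_mul, map_mul, ← h, ← h']; ring
      add_mem' := by
        rintro x y ⟨P, v, hv, h⟩ ⟨P', v', hv', h'⟩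
        refine ⟨P * v' + P' * v, v * v', by rw [map_mul]; exact mul_ne_zero hv hv', ?_⟩
        rw [map_mul, map_add, map_mul, map_mul, ← h, ← h']; ring
      neg_mem' := by
        rintro x ⟨P, v, hv, h⟩
        exact ⟨-P, v, hv, by rw [map_neg, ← h]; ring⟩ }
  have hx : ∀ x : O, ∃ P v, π v ≠ 0 ∧ W0 v * x = W0 P := fun x => x.2
  choose P v hv hP using hx
  have key : ∀ (x : O) (P' v' : R), π v' ≠ 0 → W0 v' * x = W0 P' → π (P x) / π (v x) = π P' / π v' := by
    intro x P' v' hv' h'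
    rw [div_eq_div_iff (hv x) hv', ← sub_eq_zero, ← map_mul, ← map_mul, ← map_sub]
    apply hker
    rw [map_sub, map_mul, map_mul, ← hP, ← h']; ring
  let e : O →+* k :=
    { toFun := fun x => π (P x) / π (v x)
      map_one' := by rw [key 1 1 1 (by simp) (by simp)]; simp
      map_zero' := by rw [key 0 0 1 (by simp) (by simp)]; simp
      map_mul' := fun x y => by
        rw [key (x * y) (P x * P y) (v x * v y) (by rw [map_mul]; exact mul_ne_zero (hv x) (hv y))
          (by rw [map_mul, map_mul, ← hP, ← hP]; push_cast; ring), map_mul, map_mul]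
        exact (div_mul_div_comm _ _ _ _).symm
      map_add' := fun x y => by
        rw [key (x + y) (P x * v y + v x * P y) (v x * v y) (by rw [map_mul]; exact mul_ne_zero (hv x) (hv y))
          (by rw [map_mul, map_add, map_mul, map_mul, ← hP, ← hP]; push_cast; ring), map_mul, map_add,
            map_mul, map_mul]
        exact (div_add_div _ _ (hv x) (hv y)).symm }
  refine ⟨O, e, fun Q => ⟨⟨Q, 1, by simp, by simp⟩, ?_⟩, fun x P v hv h => ⟨P, v, hv, h⟩⟩
  change π (P _) / π (v _) = _
  rw [key _ Q 1 (by simp) (by simp)]; simp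

section
variable {k : Type} [Field k] [IsAlgClosed k] (p : ℕ) [hp : Fact p.Prime] [CharP k p]

lemma spec_lemma2 {A : Type} [Field A] [CharP A p] (io : A →+* Om k) (Q : Finset A[X][X]) :
    ∃ (A0 : Type) (_ : CommRing A0) (j : A0 →+* A) (h : ℕ → A0 →+* k),
      Function.Injective j ∧ (∀ P ∈ Q, ∃ P0 : A0[X][X], P0.map (mapRingHom j) = P) ∧ germHom h = io.comp j := by
  classical
  obtain ⟨A0, i, j, h, hj, hs, hh⟩ := spec_lemma p io
    (Q.biUnion fun P => P.support.biUnion fun i => (P.coeff i).support.image fun l => (P.coeff i).coeff l)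
  refine ⟨A0, i, j, h, hj, ?_, hh⟩
  intro P hP
  have hc : ∀ i l, (P.coeff i).coeff l ∈ j.range := by
    intro i l
    by_cases h1 : (P.coeff i).coeff l = 0
    · rw [h1]; exact zero_mem _
    · apply hs
      simp only [Finset.mem_biUnion, Finset.mem_image, Polynomial.mem_support_iff, ne_eq]
      refine ⟨P, hP, i, ?_, l, h1, rfl⟩
      rintro h2; rw [h2] at h1; simp at h1
  have hc2 : ∀ i, ∃ c0 : A0[X], c0.map j = P.coeff i := by
    intro i
    have : P.coeff i ∈ lifts j := by
      rw [lifts_iff_coeff_lifts]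
      exact fun l => hc i l
    exact this
  have : P ∈ lifts (mapRingHom j) := by
    rw [lifts_iff_coeff_lifts]
    exact fun i => hc2 i
  exact this

variable {A A0 : Type} [Field A] [CommRing A0]

lemma frob_ev {τ : A →+* A} {io : A →+* Om k} {κ : ℕ → ℕ} (hphi : ∀ a, phi p κ (io a) = io (τ a))
    {j : A0 →+* A} {h : ℕ → A0 →+* k} (hh : germHom h = io.comp j)
    (g0 g0' : A0[X][X]) (hg : g0'.map (mapRingHom j) = (g0.map (mapRingHom j)).map (mapRingHom τ)) :
    ∀ᶠ N in (W : Filter ℕ), ∀ a : k, a ^ p ^ κ N = a →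
      g0'.map (eval₂RingHom (h N) a) = g0.map ((iterateFrobenius k p (κ N)).comp (eval₂RingHom (h N) a)) := by
  classical
  have h1 : ∀ i l, ∀ᶠ N in (W : Filter ℕ), h N ((g0'.coeff i).coeff l) = (h N ((g0.coeff i).coeff l)) ^ p ^ κ N := by
    intro i l
    have e1 : j ((g0'.coeff i).coeff l) = τ (j ((g0.coeff i).coeff l)) := by
      have := congrArg (fun P => (P.coeff i).coeff l) hg
      simpa using this
    have e2 : germHom h ((g0'.coeff i).coeff l) = phi p κ (germHom h ((g0.coeff i).coeff l)) := by
      rw [hh, RingHom.comp_apply, e1, ← hphi]; rfl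
    rw [germHom_apply, germHom_apply, phi_coe] at e2
    exact Germ.coe_eq.mp e2
  have h2 : ∀ᶠ N in (W : Filter ℕ), ∀ i ∈ g0.support ∪ g0'.support, ∀ l ∈ (g0.coeff i).support ∪ (g0'.coeff i).support,
      h N ((g0'.coeff i).coeff l) = (h N ((g0.coeff i).coeff l)) ^ p ^ κ N := by
    rw [Finset.eventually_all]
    intro i _
    rw [Finset.eventually_all]
    intro l _
    exact h1 i l
  filter_upwards [h2] with N hN a ha
  have hz : (0 : k) ^ p ^ κ N = 0 := zero_pow (pow_ne_zero _ hp.out.ne_zero)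
  have h3 : g0'.map (mapRingHom (h N)) = g0.map (mapRingHom ((iterateFrobenius k p (κ N)).comp (h N))) := by
    ext i l
    simp only [coeff_map, coe_mapRingHom, RingHom.comp_apply, iterateFrobenius_def]
    by_cases hi : i ∈ g0.support ∪ g0'.support
    · by_cases hl : l ∈ (g0.coeff i).support ∪ (g0'.coeff i).support
      · exact hN i hi l hl
      · simp only [Finset.mem_union, Polynomial.mem_support_iff, ne_eq, not_or, not_not] at hl
        rw [hl.1, hl.2]; simp [hz]
    · simp only [Finset.mem_union, Polynomial.mem_support_iff, ne_eq, not_or, not_not] at hi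
      rw [hi.1, hi.2]; simp [hz]
  have h4 := congrArg (Polynomial.map (evalRingHom a)) h3
  rw [Polynomial.map_map, Polynomial.map_map] at h4
  have e1 : (evalRingHom a).comp (mapRingHom (h N)) = eval₂RingHom (h N) a := by
    ext <;> simp
  have e2 : (evalRingHom a).comp (mapRingHom ((iterateFrobenius k p (κ N)).comp (h N))) =
      (iterateFrobenius k p (κ N)).comp (eval₂RingHom (h N) a) := by
    ext
    · simp
    · simp [iterateFrobenius_def, ha]
  rwa [e1, e2] at h4

end

section pt
variable {k A A0 B : Type} [Field k] [Field A] [CommRing A0] [Field B] [Algebra A[X] B]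
  {τR : A[X] →+* A[X]} {τB : B →+* B} {T : Finset B}

lemma pt (dat : AlgData τR τB T) {j : A0 →+* A} (hj : Function.Injective j) {f0 : A0[X][X]}
    (hf0 : f0.map (mapRingHom j) = dat.f) {d0 : A0[X]} (hd0 : d0.map j = dat.d) {U0 : B → A0[X][X]}
    (hU0 : ∀ x ∈ dat.V, (U0 x).map (mapRingHom j) = dat.U x) (h : A0 →+* k) (a b : k)
    (hab : ev h a b f0 = 0) (hda : eval₂ h a d0 ≠ 0) :
    ∃ (O : Subring B) (e : O →+* k) (ψ : A0[X] →+* O), e.comp ψ = eval₂RingHom h a ∧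
      O.subtype.comp ψ = (algebraMap A[X] B).comp (mapRingHom j) ∧
      ∀ x ∈ dat.V, ∃ hx : x ∈ O, eval₂ h a d0 * e ⟨x, hx⟩ = ev h a b (U0 x) := by
  have hjj : Function.Injective (mapRingHom j) := map_injective j hj
  have hf0m : f0.Monic := monic_of_injective hjj (by rw [hf0]; exact dat.hf)
  let W0 : A0[X][X] →+* B := (aeval dat.w : A[X][X] →ₐ[A[X]] B).toRingHom.comp (mapRingHom (mapRingHom j))
  have hW0 : ∀ P, W0 P = aeval dat.w (P.map (mapRingHom j)) := fun P => rfl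
  have hker : ∀ P, W0 P = 0 → ev h a b P = 0 := by
    intro P hP
    have h1 := dat.hker _ hP
    rw [← hf0] at h1
    have h2 : f0 ∣ P := by
      rw [← modByMonic_eq_zero_iff_dvd hf0m]
      apply map_injective _ hjj
      rw [map_modByMonic _ hf0m, Polynomial.map_zero, modByMonic_eq_zero_iff_dvd (hf0m.map _)]
      exact h1
    obtain ⟨c, rfl⟩ := h2
    rw [map_mul, hab, zero_mul]
  obtain ⟨O, e, h1, h2⟩ := partial_hom W0 (ev h a b) hker
  let ψ : A0[X] →+* O := (W0.comp C).codRestrict O (fun P => (h1 (C P)).1)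
  refine ⟨O, e, ψ, ?_, ?_, ?_⟩
  · ext P
    · exact (h1 (C (C P))).2.trans (by simp [ev_C])
    · exact (h1 (C X)).2.trans (by simp [ev_C])
  · refine RingHom.ext fun P => ?_
    change W0 (C P) = _
    rw [hW0]; simp
  · intro x hx
    have h3 : W0 (C d0) * x = W0 (U0 x) := by
      rw [hW0, hW0, hU0 x hx, dat.hU x hx, map_C, aeval_C, ← hd0]; rfl
    have hxO : x ∈ O := h2 x _ _ (by rw [ev_C]; exact hda) h3
    refine ⟨hxO, ?_⟩
    rw [← (h1 (U0 x)).2, ← ev_C h a b, ← (h1 (C d0)).2, ← map_mul]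
    congr 1
    exact Subtype.ext h3

end pt
end AxPer

namespace AxPer
open Polynomial Module Filter

variable {k : Type} [Field k] [IsAlgClosed k] (p : ℕ) [hp : Fact p.Prime] [CharP k p]
  {A B : Type} [Field A] [IsAlgClosed A] [CharP A p] [Field B] [Algebra A[X] B]

lemma exists_big {α : Type} [DecidableEq α] (a1 a2 a3 a4 a5 a6 a7 a8 a9 : α) (r : Finset α) :
    ∃ Q : Finset α, a1 ∈ Q ∧ a2 ∈ Q ∧ a3 ∈ Q ∧ a4 ∈ Q ∧ a5 ∈ Q ∧ a6 ∈ Q ∧ a7 ∈ Q ∧ a8 ∈ Q ∧ a9 ∈ Q ∧ r ⊆ Q := by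
  refine ⟨{a1, a2, a3, a4, a5, a6, a7, a8, a9} ∪ r, ?_⟩
  simp only [Finset.mem_union, Finset.mem_insert, true_or, or_true, true_and, Finset.mem_singleton]
  exact Finset.subset_union_right

set_option maxHeartbeats 1600000 in
theorem local_e {τ : A →+* A} {io : A →+* Om k} {κ : ℕ → ℕ} (hκ : Tendsto κ (W : Filter ℕ) atTop)
    (hphi : ∀ a, phi p κ (io a) = io (τ a))
    {τB : B →+* B} (hτB : ∀ r, τB (algebraMap A[X] B r) = algebraMap A[X] B (mapRingHom τ r))
    {T : Finset B} (dat : AlgData (mapRingHom τ) τB T) (S : Finset A)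
    (rep : A → ℕ → k) (hrep : ∀ a, (rep a : Om k) = io a) :
    ∀ᶠ N in (W : Filter ℕ), ∃ e : B → k, (∀ x ∈ T, ∀ y ∈ T, x + y ∈ T → e (x + y) = e x + e y) ∧
      (∀ x ∈ T, ∀ y ∈ T, x * y ∈ T → e (x * y) = e x * e y) ∧
      (∀ x ∈ T, e (τB x) = e x ^ p ^ κ N) ∧
      ∀ α ∈ S, e (algebraMap A[X] B (C α)) = rep α N := by
  classical
  obtain ⟨Q, q1, q2, q3, q4, q5, q6, q7, q8, q9, qR⟩ := exists_big dat.f dat.u dat.v (C dat.d) (C dat.D1) (C dat.δ)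
      (C (mapRingHom τ dat.d)) dat.g
      (dat.g.map (mapRingHom τ)) (dat.V.image dat.U ∪ T.image dat.G ∪
      T.image (fun t => (dat.G t).map (mapRingHom τ)) ∪
      (Finset.univ ×ˢ Finset.range dat.f.natDegree).image (fun x : Fin dat.n × ℕ => C (dat.Tm x.1 x.2)) ∪
      S.image (fun α => C (C α)))
  rw [Finset.union_subset_iff, Finset.union_subset_iff, Finset.union_subset_iff, Finset.union_subset_iff] at qR
  obtain ⟨⟨⟨⟨qU, qG⟩, qG'⟩, qT⟩, qS⟩ := qR
  obtain ⟨A0, _, j, h, hj, hQ, hh⟩ := spec_lemma2 p io Q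
  have hjj : Function.Injective (mapRingHom j) := map_injective j hj
  have hJ : Function.Injective (Polynomial.map (mapRingHom j)) := map_injective _ hjj
  have hC : ∀ c : A[X], C c ∈ Q → ∃ c0 : A0[X], c0.map j = c := by
    intro c hc
    obtain ⟨P, hP⟩ := hQ _ hc
    exact ⟨P.coeff 0, by simpa using congrArg (fun P => P.coeff 0) hP⟩
  obtain ⟨f0, hf0⟩ := hQ dat.f q1
  obtain ⟨u0, hu0⟩ := hQ dat.u q2
  obtain ⟨v0, hv0⟩ := hQ dat.v q3
  obtain ⟨g0, hg0⟩ := hQ dat.g q8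
  obtain ⟨g0', hg0'⟩ := hQ (dat.g.map (mapRingHom τ)) q9
  obtain ⟨d0, hd0⟩ := hC dat.d q4
  obtain ⟨D0, hD0⟩ := hC dat.D1 q5
  obtain ⟨δ0, hδ0⟩ := hC dat.δ q6
  obtain ⟨d0', hd0'⟩ := hC (mapRingHom τ dat.d) q7
  have hU : ∀ x ∈ dat.V, ∃ P0 : A0[X][X], P0.map (mapRingHom j) = dat.U x := fun x hx =>
    hQ _ (qU (Finset.mem_image_of_mem _ hx))
  choose! U0 hU0 using hU
  have hG : ∀ x ∈ T, ∃ P0 : A0[X][X], P0.map (mapRingHom j) = dat.G x := fun x hx =>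
    hQ _ (qG (Finset.mem_image_of_mem _ hx))
  choose! G0 hG0 using hG
  have hG' : ∀ x ∈ T, ∃ P0 : A0[X][X], P0.map (mapRingHom j) = (dat.G x).map (mapRingHom τ) := fun x hx =>
    hQ _ (qG' (Finset.mem_image.mpr ⟨x, hx, rfl⟩))
  choose! G0' hG0' using hG'
  have hTm : ∀ i, ∀ l ∈ Finset.range dat.f.natDegree, ∃ c0 : A0[X], c0.map j = dat.Tm i l := fun i l hl =>
    hC _ (qT (Finset.mem_image.mpr ⟨(i, l), Finset.mem_product.mpr ⟨Finset.mem_univ _, hl⟩, rfl⟩))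
  choose! Tm0 hTm0 using hTm
  have hS : ∀ α ∈ S, ∃ α0 : A0, j α0 = α := fun α hα => by
    obtain ⟨c, hc⟩ := hC (C α) (qS (Finset.mem_image.mpr ⟨α, hα, rfl⟩))
    exact ⟨c.coeff 0, by simpa using congrArg (fun P => P.coeff 0) hc⟩
  choose! α0 hα0 using hS
  have hf0m : f0.Monic := monic_of_injective hjj (by rw [hf0]; exact dat.hf)
  have hf0n : f0.natDegree = dat.f.natDegree := by rw [← hf0, natDegree_map_eq_of_injective hjj]
  have hne : ∀ {c0 : A0[X]} {c : A[X]}, c0.map j = c → c ≠ 0 → c0 ≠ 0 := by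
    rintro c0 _ rfl h1 rfl
    simp at h1
  have hmapne : ∀ c0 : A0[X], c0 ≠ 0 → ∀ᶠ N in (W : Filter ℕ), c0.map (h N) ≠ 0 := by
    intro c0 hc0
    have : c0.leadingCoeff ≠ 0 := leadingCoeff_ne_zero.mpr hc0
    filter_upwards [eventually_of_germHom hj hh this] with N hN h0
    apply hN
    have := congrArg (fun P => P.coeff c0.natDegree) h0
    simpa using this
  obtain ⟨k0, hk0⟩ := level p (k := k) f0 hf0m (by rw [hf0n]; exact dat.hfd)
    (fun j : Fin dat.n => U0 (dat.y ^ (j : ℕ)))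
    (fun i j : Fin dat.n => C d0' * U0 (dat.z i ^ (j : ℕ))) (C d0) Tm0 δ0 (d0 * D0)
    (by
      intro i l
      apply hjj
      rw [map_sum, hf0n]
      have := dat.hTm i l
      rw [apply_ite (mapRingHom j), map_zero]
      change _ = if i = l then δ0.map j else 0
      rw [hδ0, ← this]
      refine Finset.sum_congr rfl fun l' hl' => ?_
      rw [map_mul, ← coeff_map, map_modByMonic _ hf0m, hf0, hU0 _ (dat.hyjV l)]
      congr 1
      exact hTm0 i l' hl')
    ⟨C d0 * u0, C d0 * v0, by
      apply hJ
      have := dat.hbez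
      simp only [Polynomial.map_add, Polynomial.map_mul, ← derivative_map, map_C, hf0, hu0, hv0, coe_mapRingHom, hd0,
        hD0, mul_assoc]
      rw [← mul_add, this, C_mul]⟩
  have hd00 := hne hd0 dat.hd
  have hD00 := hne hD0 dat.hD1
  have hA0 : IsDomain A0 := hj.isDomain j
  have ev1 := irr_transfer hh f0 hf0m (by rw [hf0]; exact dat.hirr)
  have ev2 := hmapne δ0 (hne hδ0 dat.hδ)
  have ev3 := hmapne (d0 * D0) (mul_ne_zero hd00 hD00)
  have ev4 := frob_ev p hphi hh g0 g0' (by rw [hg0, hg0'])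
  have ev5 := frob_ev p hphi hh (C d0) (C d0') (by
    simp only [map_C, coe_mapRingHom, hd0, hd0'])
  have ev6 : ∀ᶠ N in (W : Filter ℕ), ∀ t ∈ T, ∀ a : k, a ^ p ^ κ N = a →
      (G0' t).map (eval₂RingHom (h N) a) = (G0 t).map ((iterateFrobenius k p (κ N)).comp (eval₂RingHom (h N) a)) := by
    rw [Finset.eventually_all]
    intro t ht
    exact frob_ev p hphi hh (G0 t) (G0' t) (by rw [hG0 t ht, hG0' t ht])
  have ev7 : ∀ᶠ N in (W : Filter ℕ), ∀ α ∈ S, h N (α0 α) = rep α N := by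
    rw [Finset.eventually_all]
    intro α hα
    have : germHom h (α0 α) = (rep α : Om k) := by
      rw [hrep, hh, RingHom.comp_apply, hα0 α hα]
    exact Germ.coe_eq.mp this
  filter_upwards [ev1, ev2, ev3, ev4, ev5, ev6, ev7, hκ (eventually_ge_atTop k0)] with N h1 h2 h3 h4 h5 h6 h7 h8
  have hdd : ∀ a, eval₂ (h N) a (d0 * D0) ≠ 0 → eval₂ (h N) a d0 ≠ 0 := by
    intro a ha h0
    rw [eval₂_mul, h0, zero_mul] at ha
    exact ha rfl
  have h5' : ∀ a : k, a ^ p ^ κ N = a → eval₂ (h N) a d0' = eval₂ (h N) a d0 ^ p ^ κ N := by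
    intro a ha
    have := congrArg (fun P => P.coeff 0) (h5 a ha)
    simpa only [map_C, coeff_C_zero, coe_eval₂RingHom, RingHom.comp_apply, iterateFrobenius_def] using this
  obtain ⟨a, b, hab, hDa, haq, hE⟩ := hk0 (κ N) h8 (h N) h1 h2 h3
    (fun i a b => (ev (h N) a b (U0 dat.y) / eval₂ (h N) a d0) ^ p ^ κ N =
      ev (h N) a b (U0 (dat.z i)) / eval₂ (h N) a d0)
    (by
      intro a b _ hD
      rw [ev_C]; exact hdd a hD)
    (by
      intro a b hab hD haq
      have hd := hdd a hD
      obtain ⟨O, e, ψ, he1, he2, he3⟩ := pt dat hj hf0 hd0 hU0 (h N) a b hab hd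
      obtain ⟨hyO, hey⟩ := he3 _ dat.hyV
      choose hzO hez using fun i => he3 _ (dat.hzV i)
      have r1 : eval₂ ψ (⟨dat.y, hyO⟩ : O) g0 = 0 := by
        apply O.subtype_injective
        rw [hom_eval₂, map_zero, he2, ← eval₂_map, hg0]
        exact dat.hgy
      have r2 := congrArg ((iterateFrobenius k p (κ N)).comp e) r1
      rw [hom_eval₂, map_zero, RingHom.comp_assoc, he1, ← eval_map, ← h4 a haq] at r2
      have r3 : g0'.map ψ = ∏ i, (X - C (⟨dat.z i, hzO i⟩ : O)) := by
        apply map_injective O.subtype O.subtype_injective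
        rw [Polynomial.map_map, he2, ← Polynomial.map_map, hg0', dat.hprod, Polynomial.map_prod]
        simp
      have r4 := congrArg (Polynomial.map e) r3
      rw [Polynomial.map_map, he1, Polynomial.map_prod] at r4
      rw [r4, eval_prod, Finset.prod_eq_zero_iff] at r2
      obtain ⟨i, -, hi⟩ := r2
      refine ⟨i, ?_⟩
      rw [← hey, ← hez, mul_div_cancel_left₀ _ hd, mul_div_cancel_left₀ _ hd]
      simpa [sub_eq_zero, iterateFrobenius_def] using hi)
    (by
      intro i a b hab hD haq hE l
      have hd := hdd a hD
      obtain ⟨O, e, ψ, he1, he2, he3⟩ := pt dat hj hf0 hd0 hU0 (h N) a b hab hd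
      obtain ⟨hyO, hey⟩ := he3 _ dat.hyV
      obtain ⟨hzO, hez⟩ := he3 _ (dat.hzV i)
      obtain ⟨hyjO, heyj⟩ := he3 _ (dat.hyjV l)
      obtain ⟨hzjO, hezj⟩ := he3 _ (dat.hzjV i l)
      rw [← hey, ← hez, mul_div_cancel_left₀ _ hd, mul_div_cancel_left₀ _ hd] at hE
      rw [map_mul, ev_C, ev_C, ← heyj, ← hezj, h5' a haq, mul_pow]
      have q1 : (⟨dat.y ^ (l : ℕ), hyjO⟩ : O) = ⟨dat.y, hyO⟩ ^ (l : ℕ) := rfl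
      have q2 : (⟨dat.z i ^ (l : ℕ), hzjO⟩ : O) = ⟨dat.z i, hzO⟩ ^ (l : ℕ) := rfl
      rw [q1, q2, map_pow, map_pow, ← hE]
      ring) dat.i0
  have hd := hdd a hDa
  obtain ⟨O, e, ψ, he1, he2, he3⟩ := pt dat hj hf0 hd0 hU0 (h N) a b hab hd
  have hT : ∀ t ∈ T, t ∈ O := fun t ht => (he3 t (dat.hTV t ht)).1
  have hτT : ∀ t ∈ T, τB t ∈ O := fun t ht => (he3 _ (dat.hτTV t ht)).1
  let e' : B → k := fun x => if hx : x ∈ O then e ⟨x, hx⟩ else 0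
  have he' : ∀ x (hx : x ∈ O), e' x = e ⟨x, hx⟩ := fun x hx => dif_pos hx
  obtain ⟨hyO, hey⟩ := he3 _ dat.hyV
  obtain ⟨hzO, hez⟩ := he3 _ (dat.hzV dat.i0)
  rw [← hey, ← hez, mul_div_cancel_left₀ _ hd, mul_div_cancel_left₀ _ hd] at hE
  have hψ : ∀ P, ((ψ P : O) : B) = algebraMap A[X] B (P.map j) := fun P => RingHom.congr_fun he2 P
  have heψ : ∀ P, e (ψ P) = eval₂ (h N) a P := fun P => RingHom.congr_fun he1 P
  refine ⟨e', ?_, ?_, ?_, ?_⟩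
  · intro x hx y hy hxy
    rw [he' _ (hT _ hx), he' _ (hT _ hy), he' _ (hT _ hxy), ← map_add]
    rfl
  · intro x hx y hy hxy
    rw [he' _ (hT _ hx), he' _ (hT _ hy), he' _ (hT _ hxy), ← map_mul]
    rfl
  · intro t ht
    rw [he' _ (hT _ ht), he' _ (hτT _ ht)]
    have r1 : eval₂ ψ (⟨dat.y, hyO⟩ : O) (G0 t) = ψ d0 * ⟨t, hT t ht⟩ := by
      apply O.subtype_injective
      rw [hom_eval₂, he2, ← eval₂_map, hG0 t ht, map_mul]
      change _ = ((ψ d0 : O) : B) * t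
      rw [hψ, hd0]
      exact dat.hG t ht
    have r2 : eval₂ ψ (⟨dat.z dat.i0, hzO⟩ : O) (G0' t) = ψ d0' * ⟨τB t, hτT t ht⟩ := by
      apply O.subtype_injective
      rw [hom_eval₂, he2, ← eval₂_map, hG0' t ht, map_mul]
      change _ = ((ψ d0' : O) : B) * τB t
      rw [hψ, hd0', ← hτB, ← map_mul, ← dat.hG t ht, aeval_def, hom_eval₂, eval₂_map, dat.hi0]
      congr 1
      refine RingHom.ext fun r => (hτB r).symm
    have r3 := congrArg ((iterateFrobenius k p (κ N)).comp e) r1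
    rw [hom_eval₂, RingHom.comp_assoc, he1, ← eval_map, ← h6 t ht a haq, map_mul] at r3
    have r4 := congrArg e r2
    rw [hom_eval₂, he1, ← eval_map, map_mul, heψ, h5' a haq] at r4
    simp only [RingHom.comp_apply, iterateFrobenius_def, heψ] at r3
    rw [hE] at r3
    have r5 := r4.symm.trans r3
    exact mul_left_cancel₀ (pow_ne_zero _ hd) r5
  · intro α hα
    have e1 : algebraMap A[X] B (C α) = (ψ (C (α0 α)) : O) := by
      rw [hψ, map_C, hα0 α hα]
    rw [e1, he' _ (ψ (C (α0 α))).2, ← h7 α hα]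
    change e (ψ _) = _
    rw [heψ, eval₂_C]

end AxPer

namespace AxPer
open Polynomial Module Filter

lemma sep_tau {R F B : Type} [CommRing R] [IsDomain R] [Field F] [Field B] [Algebra R F]
    [IsFractionRing R F] [Algebra F B] [Algebra R B] [IsScalarTower R F B] (τR : R →+* R)
    (hτR : Function.Injective τR) (τB : B →+* B)
    (hτ : ∀ r, τB (algebraMap R B r) = algebraMap R B (τR r)) {x : B} (hx : IsSeparable F x) :
    IsSeparable F (τB x) := by
  obtain ⟨c, g, hc, hg⟩ := exists_num (R := R) F (minpoly F x)
  have hcF : algebraMap R F c ≠ 0 := by simpa using (IsFractionRing.injective R F).ne hc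
  have hgsep : (g.map (algebraMap R F)).Separable := by
    rw [hg]
    exact (Polynomial.Separable.unit_mul (isUnit_C.mpr (isUnit_iff_ne_zero.mpr hcF)) hx)
  have hsepτ : ((g.map τR).map (algebraMap R F)).Separable := by
    obtain ⟨a, b, c, hc, hab⟩ := bez F g hgsep
    have h2 := congrArg (Polynomial.map ((algebraMap R F).comp τR)) hab
    simp only [Polynomial.map_add, Polynomial.map_mul, map_C, ← derivative_map] at h2
    have hc' : ((algebraMap R F).comp τR) c ≠ 0 := by
      rw [RingHom.comp_apply]
      simpa using ((IsFractionRing.injective R F).comp hτR).ne hc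
    rw [Polynomial.map_map]
    refine ⟨C (((algebraMap R F).comp τR) c)⁻¹ * a.map ((algebraMap R F).comp τR),
      C (((algebraMap R F).comp τR) c)⁻¹ * b.map ((algebraMap R F).comp τR), ?_⟩
    rw [mul_assoc, mul_assoc, ← mul_add, h2, ← C_mul, inv_mul_cancel₀ hc', C_1]
  refine hsepτ.of_dvd (minpoly.dvd F _ ?_)
  rw [aeval_map_algebraMap, aeval_def, eval₂_map]
  have : τB.comp (algebraMap R B) = (algebraMap R B).comp τR := RingHom.ext hτ
  rw [← this, ← hom_eval₂]
  have h3 : eval₂ (algebraMap R B) x g = 0 := by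
    rw [← aeval_def, ← aeval_map_algebraMap F, hg, map_mul, minpoly.aeval, mul_zero]
  rw [h3, map_zero]

variable {k : Type} [Field k] [IsAlgClosed k] (p : ℕ) [hp : Fact p.Prime] [CharP k p]
  {A B : Type} [Field A] [IsAlgClosed A] [CharP A p] [Field B] [IsAlgClosed B] [Algebra A[X] B]

theorem embed (F : Type) [Field F] [Algebra A[X] F] [IsFractionRing A[X] F] [Algebra F B]
    [IsScalarTower A[X] F B] [Algebra.IsAlgebraic F B] [Countable B]
    {τ : A →+* A} {io : A →+* Om k} {κ : ℕ → ℕ} (hκ : Tendsto κ (W : Filter ℕ) atTop)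
    (hphi : ∀ a, phi p κ (io a) = io (τ a))
    (τB : B →+* B) (hτB : ∀ r, τB (algebraMap A[X] B r) = algebraMap A[X] B (mapRingHom τ r)) :
    ∃ ioB : B →+* Om k, (∀ a, ioB (algebraMap A[X] B (C a)) = io a) ∧ ∀ b, phi p κ (ioB b) = ioB (τB b) := by
  classical
  have hinjF : Function.Injective (algebraMap A[X] F) := IsFractionRing.injective A[X] F
  have hinf : Infinite F := Infinite.of_injective _ hinjF
  have hRB : Function.Injective (algebraMap A[X] B) := by
    rw [IsScalarTower.algebraMap_eq A[X] F B]
    exact (algebraMap F B).injective.comp hinjF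
  have hcA : Countable A := (hRB.comp C_injective).countable
  have hCF : CharP F p := charP_of_injective_ringHom (f := (algebraMap A[X] F).comp C) (hinjF.comp C_injective) p
  have hτinj : Function.Injective (mapRingHom τ) := map_injective τ τ.injective
  choose rep hrep using fun a : A => Quotient.exists_rep (io a)
  let Bs := separableClosure F B
  have hBs : ∀ x : Bs, IsSeparable F (x : B) := fun x => mem_separableClosure_iff.mp x.2
  have hτs : ∀ x : Bs, τB x ∈ Bs := fun x => mem_separableClosure_iff.mpr (sep_tau _ hτinj τB hτB (hBs x))
  obtain ⟨en, hen⟩ := exists_surjective_nat (Bs × Bs × A)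
  let c : ℕ → ∀ N : ℕ, (B → k) → Prop := fun i N e =>
    e ((en i).1 + (en i).2.1) = e (en i).1 + e (en i).2.1 ∧
    e ((en i).1 * (en i).2.1) = e (en i).1 * e (en i).2.1 ∧
    e (τB (en i).1) = e (en i).1 ^ p ^ κ N ∧
    e (algebraMap A[X] B (C (en i).2.2)) = rep (en i).2.2 N
  obtain ⟨e, he⟩ := saturation (Y := fun _ => B → k) c (by
    intro n
    let T : Finset B := (Finset.range n).biUnion fun i => 
      {((en i).1 : B), ((en i).2.1 : B), ((en i).1 : B) + (en i).2.1, ((en i).1 : B) * (en i).2.1}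
    have hT : ∀ t ∈ T, IsSeparable F t := by
      intro t ht
      simp only [T, Finset.mem_biUnion, Finset.mem_insert, Finset.mem_singleton] at ht
      obtain ⟨i, -, rfl | rfl | rfl | rfl⟩ := ht
      · exact hBs _
      · exact hBs _
      · exact hBs ((en i).1 + (en i).2.1)
      · exact hBs ((en i).1 * (en i).2.1)
    obtain ⟨dat⟩ := exists_algData F (mapRingHom τ) hτinj τB hτB T hT
    filter_upwards [local_e p hκ hphi hτB dat ((Finset.range n).image fun i => (en i).2.2) rep hrep] with N hN
    obtain ⟨e, h1, h2, h3, h4⟩ := hN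
    refine ⟨e, fun i hi => ?_⟩
    have hi' := Finset.mem_range.mpr hi
    have m : ∀ x ∈ ({((en i).1 : B), ((en i).2.1 : B), ((en i).1 : B) + (en i).2.1, ((en i).1 : B) * (en i).2.1} : Finset B),
      x ∈ T := fun x hx => Finset.mem_biUnion.mpr ⟨i, hi', hx⟩
    have m1 := m (en i).1 (by simp)
    have m2 := m (en i).2.1 (by simp)
    exact ⟨h1 _ m1 _ m2 (m _ (by simp)), h2 _ m1 _ m2 (m _ (by simp)), h3 _ m1,
      h4 _ (Finset.mem_image.mpr ⟨i, hi', rfl⟩)⟩)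
  have he2 : ∀ (x y : Bs) (α : A), ∀ᶠ N in (W : Filter ℕ), e N (x + y) = e N x + e N y ∧
      e N (x * y) = e N x * e N y ∧ e N (τB x) = e N x ^ p ^ κ N ∧ 
      e N (algebraMap A[X] B (C α)) = rep α N := by
    intro x y α
    obtain ⟨i, hi⟩ := hen (x, y, α)
    have := he i
    simp only [c, hi] at this
    exact this
  have hα : ∀ α : A, ((fun N => e N (algebraMap A[X] B (C α)) : ℕ → k) : Om k) = io α := by
    intro α
    rw [← hrep]
    apply Germ.coe_eq.mpr
    filter_upwards [he2 0 0 α] with N hN using hN.2.2.2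
  let ios : Bs →+* Om k :=
    { toFun := fun x => ((fun N => e N x : ℕ → k) : Om k)
      map_one' := by simpa using hα 1
      map_zero' := by simpa using hα 0
      map_mul' := fun x y => Germ.coe_eq.mpr (by filter_upwards [he2 x y 0] with N hN using hN.2.1)
      map_add' := fun x y => Germ.coe_eq.mpr (by filter_upwards [he2 x y 0] with N hN using hN.1) }
  let alg : Algebra Bs (Om k) := ios.toAlgebra
  have halg : Algebra.IsAlgebraic Bs B := Algebra.IsAlgebraic.tower_top (K := F) Bs
  have htf : IsTorsionFree Bs (Om k) := isTorsionFree_iff_algebraMap_injective.mpr ios.injective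
  let l : B →ₐ[Bs] Om k := IsAlgClosed.lift
  have hl : ∀ x : Bs, l (x : B) = ((fun N => e N x : ℕ → k) : Om k) := fun x => l.commutes x
  have hls : ∀ x : Bs, phi p κ (l (x : B)) = l (τB x) := by
    intro x
    rw [hl, phi_coe]
    have := hl ⟨τB x, hτs x⟩
    refine Eq.trans ?_ this.symm
    apply Germ.coe_eq.mpr
    filter_upwards [he2 x 0 0] with N hN using hN.2.2.1.symm
  refine ⟨l, ?_, ?_⟩
  · intro a
    have e1 : algebraMap A[X] B (C a) ∈ Bs := by
      rw [IsScalarTower.algebraMap_apply A[X] F B]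
      exact Bs.algebraMap_mem _
    rw [← hα]
    exact hl ⟨_, e1⟩
  · intro b
    have hexp : ExpChar Bs p := by
      have : CharP Bs p := charP_of_injective_algebraMap (algebraMap F Bs).injective p
      exact ExpChar.prime hp.out
    obtain ⟨n, x, hx⟩ := IsPurelyInseparable.pow_mem Bs p b
    have h1 := hls x
    have hx' : (x : B) = b ^ p ^ n := hx
    rw [hx', map_pow, map_pow, map_pow, map_pow] at h1
    have hE : ExpChar (Om k) p := ExpChar.prime hp.out
    exact iterateFrobenius_inj (Om k) p n h1

end AxPer

namespace AxPer
open Polynomial Module Filter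

variable {k : Type} [Field k] [IsAlgClosed k] (p : ℕ) [hp : Fact p.Prime] [CharP k p]

/-- the back-and-forth relation -/
def Rel (κ κ' : ℕ → ℕ) {n : ℕ} (x x' : Fin n → Om k) : Prop :=
  ∃ (A : Type) (_ : Field A) (_ : IsAlgClosed A) (_ : CharP A p) (_ : Countable A)
    (τ : A →+* A) (ι ι' : A →+* Om k) (z : Fin n → A), (∀ a, phi p κ (ι a) = ι (τ a)) ∧
    (∀ a, phi p κ' (ι' a) = ι' (τ a)) ∧ (∀ i, ι (z i) = x i) ∧ ∀ i, ι' (z i) = x' i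

lemma Rel.symm {κ κ' : ℕ → ℕ} {n : ℕ} {x x' : Fin n → Om k} (h : Rel p κ κ' x x') : Rel p κ' κ x' x := by
  obtain ⟨A, h1, h2, h3, h4, τ, ι, ι', z, a, b, c, d⟩ := h
  exact ⟨A, h1, h2, h3, h4, τ, ι', ι, z, b, a, d, c⟩

lemma mem_range_of_root {B K : Type} [Field B] [IsAlgClosed B] [Field K] (i : B →+* K) {P : B[X]}
    (hP : P ≠ 0) {y : K} (hy : eval₂ i y P = 0) : ∃ b, i b = y := by
  have h1 : y ∈ (P.map i).roots := by
    rw [mem_roots (map_ne_zero hP), IsRoot.def, eval_map]; exact hy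
  rw [(IsAlgClosed.splits P).roots_map, Multiset.mem_map] at h1
  obtain ⟨b, -, hb⟩ := h1
  exact ⟨b, hb⟩

theorem Rel.extend {κ κ' : ℕ → ℕ} (hκ' : Tendsto κ' (W : Filter ℕ) atTop) {n : ℕ} {x x' : Fin n → Om k}
    (h : Rel p κ κ' x x') (a : Om k) (ha : phi p κ a = a) :
    ∃ a', phi p κ' a' = a' ∧ Rel p κ κ' (Fin.snoc x a : Fin (n + 1) → Om k) (Fin.snoc x' a' : Fin (n + 1) → Om k) := by
  obtain ⟨A, h1, h2, h3, h4, τ, ι, ι', z, hι, hι', hz, hz'⟩ := h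
  by_cases har : ∃ z0, ι z0 = a
  · obtain ⟨z0, rfl⟩ := har
    have hτ : τ z0 = z0 := ι.injective (by rw [← hι, ha])
    refine ⟨ι' z0, by rw [hι', hτ], A, h1, h2, h3, h4, τ, ι, ι', Fin.snoc z z0, hι, hι', ?_, ?_⟩
    · intro i
      refine Fin.lastCases ?_ (fun i => ?_) i <;> simp [hz]
    · intro i
      refine Fin.lastCases ?_ (fun i => ?_) i <;> simp [hz']
  let θ : A[X] →+* Om k := eval₂RingHom ι a
  have hθ : Function.Injective θ := by
    rw [injective_iff_map_eq_zero]
    intro P hP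
    by_contra h0
    exact har (mem_range_of_root ι h0 hP)
  let F := FractionRing A[X]
  let θF : F →+* Om k := IsFractionRing.lift (A := A[X]) (K := F) hθ
  have hθF : ∀ P, θF (algebraMap A[X] F P) = θ P := fun P => IsFractionRing.lift_algebraMap hθ P
  let B := AlgebraicClosure F
  let alg : Algebra F (Om k) := θF.toAlgebra
  have htf : IsTorsionFree F (Om k) := isTorsionFree_iff_algebraMap_injective.mpr θF.injective
  let ιB : B →ₐ[F] Om k := IsAlgClosed.lift
  have hιB : ∀ P, ιB (algebraMap A[X] B P) = θ P := by
    intro P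
    rw [IsScalarTower.algebraMap_apply A[X] F B, ιB.commutes]
    exact hθF P
  have hRB : Function.Injective (algebraMap A[X] B) := by
    rw [IsScalarTower.algebraMap_eq A[X] F B]
    exact (algebraMap F B).injective.comp (IsFractionRing.injective A[X] F)
  have hτinj : Function.Injective (mapRingHom τ) := map_injective τ τ.injective
  have hφθ : (phi p κ).comp ((ιB : B →+* Om k).comp (algebraMap A[X] B)) =
      (ιB : B →+* Om k).comp ((algebraMap A[X] B).comp (mapRingHom τ)) := by
    ext c
    · simp only [RingHom.comp_apply, RingHom.coe_coe, hιB]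
      simp [θ, hι]
    · simp only [RingHom.comp_apply, RingHom.coe_coe, hιB]
      simp [θ, ha]
  have hcl : ∀ b, ∃ b', ιB b' = phi p κ (ιB b) := by
    intro b
    have hb : IsAlgebraic A[X] b := (IsFractionRing.isAlgebraic_iff A[X] F B).mpr (Algebra.IsAlgebraic.isAlgebraic b)
    obtain ⟨P, hP, hPb⟩ := hb
    refine mem_range_of_root (ιB : B →+* Om k) (P := P.map ((algebraMap A[X] B).comp (mapRingHom τ))) ?_ ?_
    · have hc : Function.Injective ((algebraMap A[X] B).comp (mapRingHom τ)) := hRB.comp hτinj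
      rwa [Ne, Polynomial.map_eq_zero_iff hc]
    · rw [eval₂_map, ← hφθ, ← RingHom.comp_assoc]
      have := congrArg ((phi p κ).comp (ιB : B →+* Om k)) hPb
      rw [aeval_def, hom_eval₂, map_zero] at this
      exact this
  choose t ht using hcl
  have hinj : Function.Injective ιB := (ιB : B →+* Om k).injective
  let τB : B →+* B :=
    { toFun := t
      map_one' := hinj (by rw [ht]; simp)
      map_zero' := hinj (by rw [ht]; simp)
      map_mul' := fun x y => hinj (by rw [ht, map_mul, map_mul, map_mul, ht, ht])
      map_add' := fun x y => hinj (by rw [ht, map_add, map_add, map_add, ht, ht]) }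
  have hτB' : ∀ b, phi p κ (ιB b) = ιB (τB b) := fun b => (ht b).symm
  have hτB : ∀ r, τB (algebraMap A[X] B r) = algebraMap A[X] B (mapRingHom τ r) := fun r =>
    hinj (by rw [← hτB']; exact RingHom.congr_fun hφθ r)
  have hcX : Countable A[X] := by
    rw [← Cardinal.mk_le_aleph0_iff]
    refine Polynomial.cardinalMk_le_max.trans (max_le (Cardinal.mk_le_aleph0_iff.mpr h4) le_rfl)
  have hcF : Countable F := Function.Surjective.countable (IsLocalization.mk'_surjective (nonZeroDivisors A[X]) (S := F))
  have hcB : Countable B := by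
    rw [← Cardinal.mk_le_aleph0_iff]
    exact (Algebra.IsAlgebraic.cardinalMk_le_max F B).trans (max_le (Cardinal.mk_le_aleph0_iff.mpr hcF) le_rfl)
  have hchB : CharP B p := charP_of_injective_ringHom (f := (algebraMap A[X] B).comp C) (hRB.comp C_injective) p
  obtain ⟨ιB', e1, e2⟩ := embed p F hκ' hι' τB hτB
  have hX : τB (algebraMap A[X] B X) = algebraMap A[X] B X := by rw [hτB]; simp
  refine ⟨ιB' (algebraMap A[X] B X), by rw [e2, hX], B, inferInstance, inferInstance, hchB, hcB, τB, ιB, ιB',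
    Fin.snoc (fun i => algebraMap A[X] B (C (z i))) (algebraMap A[X] B X), hτB', e2, ?_, ?_⟩
  · intro i
    refine Fin.lastCases ?_ (fun i => ?_) i
    · simp only [Fin.snoc_last, RingHom.coe_coe, hιB]; simp [θ]
    · simp only [Fin.snoc_castSucc, RingHom.coe_coe, hιB]; simp [θ, hz]
  · intro i
    refine Fin.lastCases ?_ (fun i => ?_) i
    · simp
    · simp [e1, hz']

end AxPer

namespace AxPer
open Polynomial Module Filter FirstOrder

/-- ring structure as model-theoretic structure -/
noncomputable abbrev str (R : Type*) [Add R] [Mul R] [Neg R] [One R] [Zero R] : Language.ring.Structure R :=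
  (Ring.compatibleRingOfRing R).toStructure

/-- term evaluation in a ring -/
noncomputable def tev {R : Type*} [Add R] [Mul R] [Neg R] [One R] [Zero R] {α : Type} (t : Language.ring.Term α) (v : α → R) : R :=
  @Language.Term.realize Language.ring R (str R) α v t

/-- formula evaluation in a ring -/
def fev {R : Type*} [Add R] [Mul R] [Neg R] [One R] [Zero R] {n : ℕ} (θ : Language.ring.BoundedFormula Empty n) (v : Fin n → R) : Prop :=
  @Language.BoundedFormula.Realize Language.ring R (str R) Empty n θ default v

lemma tev_hom {R S : Type*} [CommRing R] [CommRing S] (f : R →+* S) {α : Type} (t : Language.ring.Term α) (v : α → R) :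
    f (tev t v) = tev t (f ∘ v) := by
  induction t with
  | var a => rfl
  | func F ts ih =>
    cases F with
    | add => exact (map_add f _ _).trans (congrArg₂ (· + ·) (ih 0) (ih 1))
    | mul => exact (map_mul f _ _).trans (congrArg₂ (· * ·) (ih 0) (ih 1))
    | neg => exact (map_neg f _).trans (congrArg (- ·) (ih 0))
    | zero => exact map_zero f
    | one => exact map_one f

variable {k : Type} [Field k] [IsAlgClosed k] (p : ℕ) [hp : Fact p.Prime] [CharP k p]

lemma tev_germ {α : Type} (t : Language.ring.Term α) (y : α → ℕ → k) :
    tev t (fun a => ((y a : ℕ → k) : Om k)) = ((fun N => tev t (fun a => y a N) : ℕ → k) : Om k) := by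
  have h1 := tev_hom (Germ.coeRingHom (R := k) (W : Filter ℕ)) t y
  have h2 : tev t y = fun N => tev t (fun a => y a N) := by
    funext N
    exact tev_hom (Pi.evalRingHom (fun _ : ℕ => k) N) t y
  rw [h2] at h1
  exact h1.symm

lemma tev_sum {R : Type*} [CommRing R] {n : ℕ} (f : R → k) (v : Fin n → R) :
    f ∘ (Sum.elim (default : Empty → R) v) = Sum.elim default (f ∘ v) := by
  funext a
  cases a with
  | inl a => exact a.elim
  | inr a => rfl

lemma tev_aux {E : ℕ → Type} [∀ N, Field (E N)] (j : ∀ N, E N →+* k) {n : ℕ} (x : ∀ N, Fin n → E N)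
    {A : Type} [Field A] (ι : A →+* Om k) (z : Fin n → A)
    (hz : ∀ i, ι (z i) = ((fun N => j N (x N i) : ℕ → k) : Om k)) (t₁ t₂ : Language.ring.Term (Empty ⊕ Fin n)) :
    (∀ᶠ N in (W : Filter ℕ), tev t₁ (Sum.elim default (x N)) = tev t₂ (Sum.elim default (x N))) ↔
      tev t₁ (Sum.elim default z) = tev t₂ (Sum.elim default z) := by
  have key : ∀ t : Language.ring.Term (Empty ⊕ Fin n), ι (tev t (Sum.elim default z)) =
      ((fun N => j N (tev t (Sum.elim default (x N))) : ℕ → k) : Om k) := by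
    intro t
    rw [tev_hom]
    have e : (ι ∘ Sum.elim default z) = fun a : Empty ⊕ Fin n =>
        ((fun N => j N (Sum.elim default (x N) a) : ℕ → k) : Om k) := by
      funext a
      cases a with
      | inl a => exact a.elim
      | inr a => exact hz a
    rw [e, tev_germ]
    congr 1
    funext N
    rw [tev_hom]; rfl
  rw [← ι.injective.eq_iff, key, key, Germ.coe_eq]
  refine eventually_congr (Eventually.of_forall fun N => ?_)
  exact (j N).injective.eq_iff.symm

theorem transfer {n : ℕ} (θ : Language.ring.BoundedFormula Empty n) :
    ∀ (κ κ' : ℕ → ℕ) (_ : Tendsto κ (W : Filter ℕ) atTop) (_ : Tendsto κ' (W : Filter ℕ) atTop)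
    (E E' : ℕ → Type) [∀ N, Field (E N)] [∀ N, Field (E' N)] (j : ∀ N, E N →+* k) (j' : ∀ N, E' N →+* k)
    (_ : ∀ᶠ N in (W : Filter ℕ), ∀ y, y ^ p ^ κ N = y ↔ ∃ e, j N e = y)
    (_ : ∀ᶠ N in (W : Filter ℕ), ∀ y, y ^ p ^ κ' N = y ↔ ∃ e, j' N e = y)
    (x : ∀ N, Fin n → E N) (x' : ∀ N, Fin n → E' N)
    (_ : Rel p κ κ' (fun i => ((fun N => j N (x N i) : ℕ → k) : Om k))
      (fun i => ((fun N => j' N (x' N i) : ℕ → k) : Om k))),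
    (∀ᶠ N in (W : Filter ℕ), fev θ (x N)) ↔ ∀ᶠ N in (W : Filter ℕ), fev θ (x' N) := by
  induction θ with
  | falsum => intros; rfl
  | equal t₁ t₂ =>
    intro κ κ' hκ hκ' E E' _ _ j j' hj hj' x x' h
    obtain ⟨A, h1, h2, h3, h4, τ, ι, ι', z, hι, hι', hz, hz'⟩ := h
    exact (tev_aux j x ι z hz t₁ t₂).trans (tev_aux j' x' ι' z hz' t₁ t₂).symm
  | rel R => exact Empty.elim R
  | imp f₁ f₂ ih₁ ih₂ =>
    intro κ κ' hκ hκ' E E' _ _ j j' hj hj' x x' h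
    change (∀ᶠ N in (W : Filter ℕ), fev f₁ (x N) → fev f₂ (x N)) ↔ ∀ᶠ N in (W : Filter ℕ), fev f₁ (x' N) → fev f₂ (x' N)
    rw [Ultrafilter.eventually_imp, Ultrafilter.eventually_imp, ih₁ κ κ' hκ hκ' E E' j j' hj hj' x x' h,
      ih₂ κ κ' hκ hκ' E E' j j' hj hj' x x' h]
  | all f ih =>
    have key : ∀ (κ κ' : ℕ → ℕ) (_ : Tendsto κ (W : Filter ℕ) atTop) (_ : Tendsto κ' (W : Filter ℕ) atTop)
        (E E' : ℕ → Type) [∀ N, Field (E N)] [∀ N, Field (E' N)] (j : ∀ N, E N →+* k) (j' : ∀ N, E' N →+* k)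
        (_ : ∀ᶠ N in (W : Filter ℕ), ∀ y, y ^ p ^ κ N = y ↔ ∃ e, j N e = y)
        (_ : ∀ᶠ N in (W : Filter ℕ), ∀ y, y ^ p ^ κ' N = y ↔ ∃ e, j' N e = y)
        (x : ∀ N, Fin _ → E N) (x' : ∀ N, Fin _ → E' N)
        (_ : Rel p κ κ' (fun i => ((fun N => j N (x N i) : ℕ → k) : Om k))
          (fun i => ((fun N => j' N (x' N i) : ℕ → k) : Om k))),
        (∀ᶠ N in (W : Filter ℕ), fev f.all (x' N)) → ∀ᶠ N in (W : Filter ℕ), fev f.all (x N) := by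
      intro κ κ' hκ hκ' E E' _ _ j j' hj hj' x x' h hx'
      by_contra hx
      rw [← Ultrafilter.eventually_not] at hx
      have h1 : ∀ N, ∃ e : E N, ¬ fev f.all (x N) → ¬ fev f (Fin.snoc (x N) e : Fin (_ + 1) → E N) := by
        intro N
        by_cases hN : fev f.all (x N)
        · exact ⟨0, fun h => absurd hN h⟩
        · change ¬ ∀ e, fev f (Fin.snoc (x N) e : Fin (_ + 1) → E N) at hN
          obtain ⟨e, he⟩ := not_forall.mp hN
          exact ⟨e, fun _ => he⟩
      choose e he using h1
      have ha : phi p κ ((fun N => j N (e N) : ℕ → k) : Om k) = ((fun N => j N (e N) : ℕ → k) : Om k) := by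
        rw [phi_coe, Germ.coe_eq]
        filter_upwards [hj] with N hN
        exact (hN _).mpr ⟨_, rfl⟩
      obtain ⟨a', ha', hrel⟩ := h.extend p hκ' _ ha
      obtain ⟨a, haa⟩ := Quotient.exists_rep a'
      obtain rfl : ((a : ℕ → k) : Om k) = a' := haa
      have ha2 : ∀ᶠ N in (W : Filter ℕ), a N ^ p ^ κ' N = a N := Germ.coe_eq.mp ha'
      have h2 : ∀ N, ∃ e' : E' N, (∃ u, j' N u = a N) → j' N e' = a N := by
        intro N
        by_cases hN : ∃ u, j' N u = a N
        · obtain ⟨u, hu⟩ := hN; exact ⟨u, fun _ => hu⟩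
        · exact ⟨0, fun h => absurd h hN⟩
      choose e' he' using h2
      have e3 : ((fun N => j' N (e' N) : ℕ → k) : Om k) = ((a : ℕ → k) : Om k) := by
        rw [Germ.coe_eq]
        filter_upwards [hj', ha2] with N hN h3
        exact he' N ((hN _).mp h3)
      have hrel2 : Rel p κ κ' (fun i => ((fun N => j N ((Fin.snoc (x N) (e N) : Fin (_ + 1) → E N) i) : ℕ → k) : Om k))
          (fun i => ((fun N => j' N ((Fin.snoc (x' N) (e' N) : Fin (_ + 1) → E' N) i) : ℕ → k) : Om k)) := by
        convert hrel using 1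
        · funext i
          refine Fin.lastCases ?_ (fun i => ?_) i <;> simp
        · funext i
          refine Fin.lastCases ?_ (fun i => ?_) i
          · simp only [Fin.snoc_last]; exact e3
          · simp
      have h5 := (ih κ κ' hκ hκ' E E' j j' hj hj' _ _ hrel2).mpr (by
        filter_upwards [hx'] with N hN
        exact hN _)
      obtain ⟨N, h6, h7⟩ := (h5.and hx).exists
      exact he N h7 h6
    intro κ κ' hκ hκ' E E' _ _ j j' hj hj' x x' h
    exact ⟨key κ' κ hκ' hκ E' E j' j hj' hj x' x (h.symm p), key κ κ' hκ hκ' E E' j j' hj hj' x x' h⟩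

end AxPer

namespace AxPer
open Polynomial Module Filter FirstOrder

/-- algebraic closure of the prime field -/
abbrev Kb (p : ℕ) [Fact p.Prime] : Type := AlgebraicClosure (ZMod p)

variable (p : ℕ) [hp : Fact p.Prime]

instance : CharP (Kb p) p := charP_of_injective_algebraMap (algebraMap (ZMod p) (Kb p)).injective p

/-- embedding of finite fields -/
noncomputable def jj (n : ℕ) : GaloisField p n →+* Kb p :=
  ((IsAlgClosed.lift : GaloisField p n →ₐ[ZMod p] Kb p) : GaloisField p n →+* Kb p)

lemma jj_range (n : ℕ) (hn : n ≠ 0) (y : Kb p) : y ^ p ^ n = y ↔ ∃ e, jj p n e = y := by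
  constructor
  · intro hy
    let P : (GaloisField p n)[X] := (X ^ p ^ n - X : (ZMod p)[X]).map (algebraMap (ZMod p) (GaloisField p n))
    have hs : P.Splits := SplittingField.splits (X ^ p ^ n - X : (ZMod p)[X])
    have hP : P ≠ 0 := by
      simp only [P, Polynomial.map_sub, Polynomial.map_pow, map_X]
      exact FiniteField.X_pow_card_pow_sub_X_ne_zero _ hn hp.out.one_lt
    have h1 : y ∈ (P.map (jj p n)).roots := by
      rw [mem_roots (map_ne_zero hP), IsRoot.def]
      simp [P, hy]
    rw [hs.roots_map, Multiset.mem_map] at h1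
    obtain ⟨b, -, hb⟩ := h1
    exact ⟨b, hb⟩
  · rintro ⟨e, rfl⟩
    rw [← map_pow]
    congr 1
    have : Fintype (GaloisField p n) := Fintype.ofFinite _
    have h := FiniteField.pow_card e
    rwa [← Nat.card_eq_fintype_card, GaloisField.card p n hn] at h

lemma exists_period (a : Kb p) : ∃ m, m ≠ 0 ∧ a ^ p ^ m = a := by
  have hi : IsIntegral (ZMod p) a := (Algebra.IsAlgebraic.isAlgebraic (R := ZMod p) a).isIntegral
  let F := IntermediateField.adjoin (ZMod p) {a}
  have : FiniteDimensional (ZMod p) F := IntermediateField.adjoin.finiteDimensional hi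
  have : Finite F := Module.finite_of_finite (ZMod p)
  have : Fintype F := Fintype.ofFinite _
  have h := FiniteField.pow_card (⟨a, IntermediateField.mem_adjoin_simple_self _ a⟩ : F)
  rw [Module.card_eq_pow_finrank (K := ZMod p) (V := F), ZMod.card] at h
  exact ⟨_, (Module.finrank_pos (R := ZMod p) (M := F)).ne', congrArg Subtype.val h⟩

lemma pow_period {a : Kb p} {m : ℕ} (h : a ^ p ^ m = a) (c : ℕ) : a ^ p ^ (m * c) = a := by
  induction c with
  | zero => simp
  | succ c ih => rw [mul_add, mul_one, pow_add, pow_mul, ih, h]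

lemma initial (κ : ℕ → ℕ) (x x' : Fin 0 → Om (Kb p)) : Rel p κ (fun N => κ N + N.factorial) x x' := by
  have hcount : Countable (Kb p) := by
    rw [← Cardinal.mk_le_aleph0_iff]
    exact (Algebra.IsAlgebraic.cardinalMk_le_max (ZMod p) (Kb p)).trans (max_le (Cardinal.mk_le_aleph0_iff.mpr inferInstance) le_rfl)
  let ι : Kb p →+* Om (Kb p) := germHom (fun _ => RingHom.id _)
  have hcl : ∀ b, ∃ b', ι b' = phi p κ (ι b) := by
    intro b
    obtain ⟨m, hm, hb⟩ := exists_period p b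
    refine mem_range_of_root ι (P := X ^ p ^ m - X) (FiniteField.X_pow_card_pow_sub_X_ne_zero _ hm hp.out.one_lt) ?_
    simp only [eval₂_sub, eval₂_pow, eval₂_X]
    rw [← map_pow, ← map_pow, hb, sub_self]
  choose t ht using hcl
  have hinj : Function.Injective ι := ι.injective
  let τ : Kb p →+* Kb p :=
    { toFun := t
      map_one' := hinj (by rw [ht]; simp)
      map_zero' := hinj (by rw [ht]; simp)
      map_mul' := fun x y => hinj (by rw [ht, map_mul, map_mul, map_mul, ht, ht])
      map_add' := fun x y => hinj (by rw [ht, map_add, map_add, map_add, ht, ht]) }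
  refine ⟨Kb p, inferInstance, inferInstance, inferInstance, hcount, τ, ι, ι, Fin.elim0, fun a => (ht a).symm, ?_,
    fun i => i.elim0, fun i => i.elim0⟩
  intro a
  refine Eq.trans ?_ (ht a).symm
  obtain ⟨m, hm, hb⟩ := exists_period p a
  simp only [ι]
  rw [germHom_apply, phi_coe, phi_coe, Germ.coe_eq]
  have hev : ∀ᶠ N in (W : Filter ℕ), m ≤ N :=
    (Nat.hyperfilter_le_atTop) (eventually_ge_atTop m)
  filter_upwards [hev] with N hN
  obtain ⟨c, hc⟩ := Nat.dvd_factorial (Nat.pos_of_ne_zero hm) hN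
  simp only [RingHom.id_apply]
  rw [add_comm, pow_add, pow_mul, hc, pow_period p hb]

lemma holds_iff (σ : Language.ring.Sentence) (E : Type) [Field E] :
    RingSentenceHolds σ E ↔ fev σ (Fin.elim0 : Fin 0 → E) := by
  rw [Subsingleton.elim (Fin.elim0 : Fin 0 → E) default]
  rfl

theorem main (σ : Language.ring.Sentence) :
    ∃ K n : ℕ, 1 ≤ n ∧ ∀ k : ℕ, K ≤ k →
      (RingSentenceHolds σ (GaloisField p k) ↔ RingSentenceHolds σ (GaloisField p (k + n))) := by
  by_contra hcon
  have h : ∀ N : ℕ, ∃ k, N ≤ k ∧ ¬ (RingSentenceHolds σ (GaloisField p k) ↔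
      RingSentenceHolds σ (GaloisField p (k + N.factorial))) := by
    intro N
    by_contra hN
    refine hcon ⟨N, N.factorial, N.factorial_pos, fun k hk => ?_⟩
    by_contra hk2
    exact hN ⟨k, hk, hk2⟩
  choose κ hκ hne using h
  have hW : (W : Filter ℕ) ≤ atTop := Nat.hyperfilter_le_atTop
  have t1 : Tendsto κ (W : Filter ℕ) atTop := (tendsto_atTop_mono hκ tendsto_id).mono_left hW
  have t2 : Tendsto (fun N => κ N + N.factorial) (W : Filter ℕ) atTop :=
    tendsto_atTop_mono (fun N => Nat.le_add_right _ _) t1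
  have r1 : ∀ κ : ℕ → ℕ, Tendsto κ (W : Filter ℕ) atTop → ∀ᶠ N in (W : Filter ℕ), ∀ y : Kb p, y ^ p ^ κ N = y ↔ ∃ e, jj p (κ N) e = y := by
    intro κ hκ
    filter_upwards [hκ (eventually_ge_atTop 1)] with N hN y
    have hN' : 1 ≤ κ N := hN
    exact jj_range p _ (by omega) y
  have key := transfer (k := Kb p) p σ κ (fun N => κ N + N.factorial) t1 t2 (fun N => GaloisField p (κ N))
    (fun N => GaloisField p (κ N + N.factorial)) (fun N => jj p _) (fun N => jj p _) (r1 _ t1) (r1 _ t2)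
    (fun N => Fin.elim0) (fun N => Fin.elim0) (initial p κ _ _)
  have key2 : (∀ᶠ N in (W : Filter ℕ), RingSentenceHolds σ (GaloisField p (κ N))) ↔
      ∀ᶠ N in (W : Filter ℕ), RingSentenceHolds σ (GaloisField p (κ N + N.factorial)) := by
    simp only [holds_iff]
    exact key
  by_cases hc : ∀ᶠ N in (W : Filter ℕ), RingSentenceHolds σ (GaloisField p (κ N))
  · obtain ⟨N, ha, hb⟩ := (hc.and (key2.mp hc)).exists
    exact hne N ⟨fun _ => hb, fun _ => ha⟩
  · have hc' := mt key2.mpr hc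
    rw [← Ultrafilter.eventually_not] at hc hc'
    obtain ⟨N, ha, hb⟩ := (hc.and hc').exists
    exact hne N ⟨fun h => absurd h ha, fun h => absurd h hb⟩

end AxPer

/-- For a fixed prime `p`, the truth of a ring-language sentence `σ` in the finite fields
`GaloisField p k` is eventually periodic in the exponent `k`. -/
theorem sentence_eventually_periodic (σ : Language.ring.Sentence)
    (p : ℕ) [Fact p.Prime] :
    ∃ K n : ℕ, 1 ≤ n ∧ ∀ k : ℕ, K ≤ k →
      (RingSentenceHolds σ (GaloisField p k) ↔
        RingSentenceHolds σ (GaloisField p (k + n))) := by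
  exact AxPer.main p σ
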